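/- arXiv:2604.22357 — 2 statements merged into one kernel-verified Lean document; each statement's English description precedes it below -/
import Mathlib

section
/- For every ε > 0 there exists Δ_ε such that every graph G with maximum degree Δ ≥ Δ_ε satisfies χ'_cf(G) ≤ (1+ε) log₂ Δ, where χ'_cf(G) is the minimum number of colours in a conflict-free edge colouring of G. -/
open SimpleGraph

/-- The closed neighbourhood of an edge `e`: all edges of `G` sharing a vertex with `e`. -/
def ECN {V : Type*} (G : SimpleGraph V) (e : Sym2 V) : Set (Sym2 V) :=
  {f | f ∈ G.edgeSet ∧ ∃ w, w ∈ f ∧ w ∈ e}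

/-- The open neighbourhood of an edge `e`. -/
def EON {V : Type*} (G : SimpleGraph V) (e : Sym2 V) : Set (Sym2 V) :=
  ECN G e \ {e}

/-- `c` is a closed conflict-free edge colouring of `G` with `k` colours. -/
def ClosedCF {V : Type*} (G : SimpleGraph V) (c : Sym2 V → ℕ) (k : ℕ) : Prop :=
  (∀ e ∈ G.edgeSet, c e < k) ∧
  ∀ e ∈ G.edgeSet, ∃ α, ∃! f, f ∈ ECN G e ∧ c f = α

/-- `c` is an open conflict-free edge colouring of `G` with `k` colours. -/
def OpenCF {V : Type*} (G : SimpleGraph V) (c : Sym2 V → ℕ) (k : ℕ) : Prop :=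
  (∀ e ∈ G.edgeSet, c e < k) ∧
  ∀ e ∈ G.edgeSet, (EON G e).Nonempty → ∃ α, ∃! f, f ∈ EON G e ∧ c f = α

/-- `c` is a conflict-free edge colouring of `G` with `k` colours:
every non-isolated edge `e` has an edge `e'` in its open neighbourhood whose
colour appears on no other edge of the closed neighbourhood of `e`. -/
def ConflictFree {V : Type*} (G : SimpleGraph V) (c : Sym2 V → ℕ) (k : ℕ) : Prop :=
  (∀ e ∈ G.edgeSet, c e < k) ∧
  ∀ e ∈ G.edgeSet, (EON G e).Nonempty →
    ∃ e' ∈ EON G e, ∀ f ∈ ECN G e, c f = c e' → f = e'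

/-- A partial edge colouring of `G` with `k` colours. -/
def PartialColouring {V : Type*} (G : SimpleGraph V) (c : Sym2 V → Option ℕ) (k : ℕ) : Prop :=
  ∀ e α, c e = some α → e ∈ G.edgeSet ∧ α < k

/-- An edge `e` is satisfied by the partial colouring `c`. -/
def SatisfiedP {V : Type*} (G : SimpleGraph V) (c : Sym2 V → Option ℕ) (e : Sym2 V) : Prop :=
  ∃ e' ∈ EON G e, ∃ α, c e' = some α ∧ ∀ f ∈ ECN G e, c f = some α → f = e'

/-- Vertex `v` is incident with a uniquely coloured edge under partial colouring `c`. -/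
def UniqueAt {V : Type*} (G : SimpleGraph V) (c : Sym2 V → Option ℕ) (v : V) : Prop :=
  ∃ e ∈ G.incidenceSet v, ∃ α, c e = some α ∧
    ∀ f ∈ G.incidenceSet v, c f = some α → f = e

/-- `G` is `k`-degenerate: there is a vertex ordering in which every vertex
has at most `k` earlier neighbours. -/
def IsDegenerate {V : Type*} (G : SimpleGraph V) (k : ℕ) : Prop :=
  ∃ f : V ↪ ℕ, ∀ v, {u ∈ G.neighborSet v | f u < f v}.ncard ≤ k

/-- The open conflict-free chromatic index. -/
noncomputable def ocfIndex {V : Type*} (G : SimpleGraph V) : ℕ :=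
  sInf {k | ∃ c, OpenCF G c k}

/-- The closed conflict-free chromatic index. -/
noncomputable def ccfIndex {V : Type*} (G : SimpleGraph V) : ℕ :=
  sInf {k | ∃ c, ClosedCF G c k}

/-- The conflict-free chromatic index. -/
noncomputable def cfIndex {V : Type*} (G : SimpleGraph V) : ℕ :=
  sInf {k | ∃ c, ConflictFree G c k}

open Finset in
theorem grundy_aux {α : Type*} [DecidableEq α] (R : α → α → Prop) (hR : ∀ a b, R a b → R b a)
    (S : Finset α) : ∃ c : α → ℕ,
    (∀ a ∈ S, ∀ b ∈ S, R a b → a ≠ b → c a ≠ c b) ∧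
    ∀ a ∈ S, ∀ j < c a, ∃ b ∈ S, b ≠ a ∧ R a b ∧ c b = j := by
  classical
  induction S using Finset.induction_on with
  | empty => exact ⟨fun _ => 0, by simp, by simp⟩
  | insert x S hx ih =>
    obtain ⟨c, h1, h2⟩ := ih
    have hex : ∃ n, n ∉ (S.filter (fun b => R x b)).image c := Infinite.exists_notMem_finset _
    have hspec := Nat.find_spec hex
    have hmin := fun j (hj : j < Nat.find hex) => Nat.find_min hex hj
    generalize Nat.find hex = n at hspec hmin
    have hne : ∀ a ∈ S, a ≠ x := fun a ha h => hx (h ▸ ha)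
    refine ⟨Function.update c x n, ?_, ?_⟩
    · intro a ha b hb hab hn
      rw [Finset.mem_insert] at ha hb
      rcases ha with rfl | ha <;> rcases hb with rfl | hb
      · exact absurd rfl hn
      · rw [Function.update_self, Function.update_of_ne (hne b hb)]
        intro h
        exact hspec (Finset.mem_image.2 ⟨b, by simp [hb, hab], h.symm⟩)
      · rw [Function.update_self, Function.update_of_ne (hne a ha)]
        intro h
        exact hspec (Finset.mem_image.2 ⟨a, by simp [ha, hR _ _ hab], h⟩)
      · rw [Function.update_of_ne (hne a ha), Function.update_of_ne (hne b hb)]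
        exact h1 a ha b hb hab hn
    · intro a ha j hj
      rw [Finset.mem_insert] at ha
      rcases ha with rfl | ha
      · rw [Function.update_self] at hj
        have := hmin j hj
        simp only [not_not, Finset.mem_image, Finset.mem_filter] at this
        obtain ⟨b, ⟨hb, hab⟩, hc⟩ := this
        exact ⟨b, by simp [hb], hne b hb, hab, by rw [Function.update_of_ne (hne b hb)]; exact hc⟩
      · rw [Function.update_of_ne (hne a ha)] at hj
        obtain ⟨b, hb, hba, hab, hc⟩ := h2 a ha j hj
        exact ⟨b, by simp [hb], hba, hab, by rw [Function.update_of_ne (hne b hb)]; exact hc⟩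

/-- Greedy (Grundy) colouring. -/
theorem grundy {α : Type*} [Fintype α] (R : α → α → Prop)
    (hR : ∀ a b, R a b → R b a) : ∃ c : α → ℕ,
    (∀ a b, R a b → a ≠ b → c a ≠ c b) ∧
    ∀ a, ∀ j < c a, ∃ b, b ≠ a ∧ R a b ∧ c b = j := by
  classical
  obtain ⟨c, h1, h2⟩ := grundy_aux R hR Finset.univ
  refine ⟨c, fun a b => h1 a (Finset.mem_univ _) b (Finset.mem_univ _), fun a j hj => ?_⟩
  obtain ⟨b, -, h⟩ := h2 a (Finset.mem_univ _) j hj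
  exact ⟨b, h⟩

theorem indep_card {ι : Type*} [Fintype ι] [DecidableEq ι] (X Y : Finset (ι → Bool)) (C : Finset ι)
    (hX : ∀ ω ω', (∀ x ∈ C, ω x = ω' x) → ω ∈ X → ω' ∈ X)
    (hY : ∀ ω ω', (∀ x, x ∉ C → ω x = ω' x) → ω ∈ Y → ω' ∈ Y) :
    (X ∩ Y).card * Fintype.card (ι → Bool) ≤ X.card * Y.card := by
  classical
  rw [← Finset.card_univ, ← Finset.card_product, ← Finset.card_product]
  refine Finset.card_le_card_of_injOn
    (fun q => (fun x => if x ∈ C then q.1 x else q.2 x, fun x => if x ∈ C then q.2 x else q.1 x)) ?_ ?_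
  · rintro ⟨z, w⟩ h
    simp only [Finset.coe_product, Set.mem_prod, Finset.mem_coe, Finset.mem_inter, Finset.mem_univ,
      and_true] at h
    simp only [Finset.coe_product, Set.mem_prod, Finset.mem_coe]
    refine ⟨hX z _ ?_ h.1, hY z _ ?_ h.2⟩
    · intro x hx; simp [hx]
    · intro x hx; simp [hx]
  · rintro ⟨z, w⟩ - ⟨z', w'⟩ - h
    simp only [Prod.mk.injEq] at h
    obtain ⟨h1, h2⟩ := h
    have h1 := fun x => congrFun h1 x
    have h2 := fun x => congrFun h2 x
    ext x
    · by_cases hx : x ∈ C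
      · have := h1 x; simp only [hx, if_true] at this; exact this
      · have := h2 x; simp only [hx, if_false] at this; exact this
    · by_cases hx : x ∈ C
      · have := h2 x; simp only [hx, if_true] at this; exact this
      · have := h1 x; simp only [hx, if_false] at this; exact this

theorem count_card {ι : Type*} [Fintype ι] [DecidableEq ι] (B : Finset (ι → Bool)) (D : Finset ι)
    (hB : ∀ ω ∈ B, ∀ ω' ∈ B, (∀ x, x ∉ D → ω x = ω' x) → ∀ x ∈ D, ω x = ω' x) :
    B.card * 2 ^ D.card ≤ Fintype.card (ι → Bool) := by
  classical
  have h1 : B.card ≤ Fintype.card ({x // x ∉ D} → Bool) := by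
    rw [← Finset.card_univ]
    refine Finset.card_le_card_of_injOn (fun ω x => ω x.1) (by simp) ?_
    intro ω h ω' h' he
    have : ∀ x, x ∉ D → ω x = ω' x := fun x hx => congrFun he ⟨x, hx⟩
    funext x
    by_cases hx : x ∈ D
    · exact hB ω h ω' h' this x hx
    · exact this x hx
  have h2 : Fintype.card {x // x ∉ D} = Fintype.card ι - D.card := by
    rw [Fintype.card_subtype_compl]; simp
  have h3 : D.card ≤ Fintype.card ι := Finset.card_le_univ D
  calc B.card * 2 ^ D.card ≤ Fintype.card ({x // x ∉ D} → Bool) * 2 ^ D.card :=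
        Nat.mul_le_mul_right _ h1
    _ = Fintype.card (ι → Bool) := by
        rw [Fintype.card_fun, Fintype.card_fun, h2, Fintype.card_bool, ← pow_add]
        congr 1; omega

/-- Lovász local lemma, sum form, on the discrete cube. -/
theorem lll {ι I : Type*} [Fintype ι] [DecidableEq ι] [DecidableEq I]
    (E : Finset I) (B : I → Finset (ι → Bool)) (C : I → Finset ι)
    (hdep : ∀ i ω ω', (∀ x ∈ C i, ω x = ω' x) → ω ∈ B i → ω' ∈ B i)
    (p : I → ℝ) (hp : ∀ i ∈ E, ((B i).card : ℝ) ≤ p i * (Fintype.card (ι → Bool) : ℝ))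
    (hp4 : ∀ i ∈ E, p i ≤ 1 / 4)
    (hsum : ∀ i ∈ E, ∑ j ∈ E with ¬ Disjoint (C i) (C j), p j ≤ 1 / 4) :
    ∃ ω, ∀ i ∈ E, ω ∉ B i := by
  classical
  set N : Finset I → Finset (ι → Bool) := fun S => Finset.univ.filter (fun ω => ∀ i ∈ S, ω ∉ B i)
    with hN
  have hpos : (0:ℝ) < (Fintype.card (ι → Bool) : ℝ) := by
    exact_mod_cast Fintype.card_pos
  have hp0 : ∀ i ∈ E, 0 ≤ p i := by
    intro i hi
    by_contra h
    push Not at h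
    have := hp i hi
    have h2 := mul_neg_of_neg_of_pos h hpos
    have h3 : (0:ℝ) ≤ ((B i).card : ℝ) := by positivity
    linarith
  have key : ∀ n : ℕ, ∀ S ⊆ E, S.card = n → ∀ i ∈ E,
      ((B i ∩ N S).card : ℝ) ≤ 2 * p i * ((N S).card : ℝ) := by
    intro n
    induction n using Nat.strong_induction_on with
    | _ n ih =>
    intro S hSE hSn i hi
    set S1 := S.filter (fun j => ¬ Disjoint (C i) (C j)) with hS1
    set S2 := S.filter (fun j => Disjoint (C i) (C j)) with hS2
    have hsub : N S ⊆ N S2 := by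
      intro ω h
      simp only [hN, Finset.mem_filter, Finset.mem_univ, true_and] at h ⊢
      exact fun j hj => h j (Finset.mem_of_mem_filter j hj)
    have hind : ((B i ∩ N S2).card : ℝ) ≤ p i * ((N S2).card : ℝ) := by
      have h := indep_card (B i) (N S2) (C i) (hdep i) (by
        intro ω ω' hag h
        simp only [hN, Finset.mem_filter, Finset.mem_univ, true_and] at h ⊢
        intro j hj hb
        refine h j hj (hdep j ω' ω ?_ hb)
        intro x hx
        have hd : Disjoint (C i) (C j) := (Finset.mem_filter.1 hj).2
        exact (hag x (fun hxi => Finset.disjoint_left.1 hd hxi hx)).symm)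
      have h' : ((B i ∩ N S2).card : ℝ) * (Fintype.card (ι → Bool) : ℝ) ≤
          ((B i).card : ℝ) * ((N S2).card : ℝ) := by exact_mod_cast h
      have h3 : ((B i).card : ℝ) * ((N S2).card : ℝ) ≤
          (p i * (Fintype.card (ι → Bool) : ℝ)) * ((N S2).card : ℝ) :=
        mul_le_mul_of_nonneg_right (hp i hi) (by positivity)
      refine le_of_mul_le_mul_right ?_ hpos
      linarith
    have hle : ((B i ∩ N S).card : ℝ) ≤ ((B i ∩ N S2).card : ℝ) := by
      exact_mod_cast Finset.card_le_card (Finset.inter_subset_inter_left hsub)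
    have hhalf : ((N S2).card : ℝ) ≤ 2 * ((N S).card : ℝ) := by
      by_cases he : S1 = ∅
      · have : S2 = S := by
          rw [hS2, Finset.filter_eq_self]
          intro j hj
          by_contra hd
          have : j ∈ S1 := by rw [hS1, Finset.mem_filter]; exact ⟨hj, hd⟩
          rw [he] at this
          simp at this
        rw [this]
        have : (0:ℝ) ≤ ((N S).card : ℝ) := by positivity
        linarith
      · have hlt : S2.card < n := by
          rw [← hSn]
          apply Finset.card_lt_card
          obtain ⟨j, hj⟩ := Finset.nonempty_iff_ne_empty.2 he
          rw [hS1, Finset.mem_filter] at hj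
          exact Finset.filter_ssubset.2 ⟨j, hj.1, hj.2⟩
        have hcov : N S2 ⊆ N S ∪ S1.biUnion (fun j => B j ∩ N S2) := by
          intro ω h
          by_cases hω : ω ∈ N S
          · exact Finset.mem_union_left _ hω
          · apply Finset.mem_union_right
            simp only [hN, Finset.mem_filter, Finset.mem_univ, true_and, not_forall, not_not] at hω
            obtain ⟨j, hj, hb⟩ := hω
            have hj1 : j ∈ S1 := by
              rw [hS1, Finset.mem_filter]
              refine ⟨hj, fun hd => ?_⟩
              simp only [hN, Finset.mem_filter, Finset.mem_univ, true_and] at h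
              exact h j (by rw [hS2, Finset.mem_filter]; exact ⟨hj, hd⟩) hb
            exact Finset.mem_biUnion.2 ⟨j, hj1, Finset.mem_inter.2 ⟨hb, h⟩⟩
        have hc1 : (N S2).card ≤ (N S).card + ∑ j ∈ S1, (B j ∩ N S2).card :=
          (Finset.card_le_card hcov).trans ((Finset.card_union_le _ _).trans
            (Nat.add_le_add_left Finset.card_biUnion_le _))
        have hc2 : ((N S2).card : ℝ) ≤ ((N S).card : ℝ) + ∑ j ∈ S1, ((B j ∩ N S2).card : ℝ) := by
          exact_mod_cast hc1
        have hS1E : S1 ⊆ E.filter (fun j => ¬ Disjoint (C i) (C j)) :=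
          Finset.filter_subset_filter _ hSE
        have hc3 : ∑ j ∈ S1, ((B j ∩ N S2).card : ℝ) ≤ ∑ j ∈ S1, 2 * p j * ((N S2).card : ℝ) := by
          apply Finset.sum_le_sum
          intro j hj
          exact ih _ hlt S2 ((Finset.filter_subset _ _).trans hSE) rfl j
            (Finset.mem_of_mem_filter j (hS1E hj))
        have hc4 : ∑ j ∈ S1, p j ≤ 1 / 4 := by
          refine le_trans (Finset.sum_le_sum_of_subset_of_nonneg hS1E ?_) (hsum i hi)
          intro j hj _
          exact hp0 j (Finset.mem_of_mem_filter j hj)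
        rw [← Finset.sum_mul, ← Finset.mul_sum] at hc3
        have : 2 * (∑ j ∈ S1, p j) * ((N S2).card : ℝ) ≤ 2 * (1 / 4) * ((N S2).card : ℝ) := by
          gcongr
        linarith
    have : p i * ((N S2).card : ℝ) ≤ p i * (2 * ((N S).card : ℝ)) :=
      mul_le_mul_of_nonneg_left hhalf (hp0 i hi)
    linarith
  have hne : ∀ S ⊆ E, 0 < (N S).card := by
    intro S
    induction S using Finset.induction_on with
    | empty => intro _; simp [hN]
    | insert j S hj ih =>
      intro hSE
      have hSE' : S ⊆ E := (Finset.subset_insert _ _).trans hSE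
      have hjE : j ∈ E := hSE (Finset.mem_insert_self _ _)
      have h0 := ih hSE'
      have h1 := key _ S hSE' rfl j hjE
      have h2 : N S ⊆ N (insert j S) ∪ (B j ∩ N S) := by
        intro ω h
        by_cases hb : ω ∈ B j
        · exact Finset.mem_union_right _ (Finset.mem_inter.2 ⟨hb, h⟩)
        · apply Finset.mem_union_left
          simp only [hN, Finset.mem_filter, Finset.mem_univ, true_and] at h ⊢
          intro i hi
          rcases Finset.mem_insert.1 hi with rfl | hi
          · exact hb
          · exact h i hi
      have h3 : ((N S).card : ℝ) ≤ ((N (insert j S)).card : ℝ) + ((B j ∩ N S).card : ℝ) := by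
        exact_mod_cast (Finset.card_le_card h2).trans (Finset.card_union_le _ _)
      have h4 : 2 * p j * ((N S).card : ℝ) ≤ 2 * (1 / 4) * ((N S).card : ℝ) := by
        have := hp4 j hjE
        gcongr
      have h5 : (0:ℝ) < ((N S).card : ℝ) := by exact_mod_cast h0
      have : (0:ℝ) < ((N (insert j S)).card : ℝ) := by linarith
      exact_mod_cast this
  obtain ⟨ω, hω⟩ := Finset.card_pos.1 (hne E subset_rfl)
  simp only [hN, Finset.mem_filter, Finset.mem_univ, true_and] at hω
  exact ⟨ω, hω⟩

/-- A proper edge colouring. -/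
def ProperE {V : Type*} (G : SimpleGraph V) (m : Sym2 V → ℕ) : Prop :=
  ∀ e ∈ G.edgeSet, ∀ f ∈ G.edgeSet, (∃ w, w ∈ e ∧ w ∈ f) → e ≠ f → m e ≠ m f

theorem three_eq {V : Type*} {G : SimpleGraph V} {m : Sym2 V → ℕ} (hm : ProperE G m)
    {e f g h : Sym2 V} (hf : f ∈ EON G e) (hg : g ∈ EON G e) (hh : h ∈ EON G e)
    (hfg : m f = m g) (hfh : m f = m h) (nfg : f ≠ g) (nfh : f ≠ h) : g = h := by
  induction e using Sym2.ind with
  | _ u v =>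
  obtain ⟨⟨hfE, a, haf, hae⟩, -⟩ := hf
  obtain ⟨⟨hgE, b, hbg, hbe⟩, -⟩ := hg
  obtain ⟨⟨hhE, c, hch, hce⟩, -⟩ := hh
  have h1 : a ≠ b := fun h => hm f hfE g hgE ⟨a, haf, h ▸ hbg⟩ nfg hfg
  have h2 : a ≠ c := fun hac => hm f hfE h hhE ⟨a, haf, hac ▸ hch⟩ nfh hfh
  have h3 : b = c := by
    rw [Sym2.mem_iff] at hae hbe hce
    grind
  by_contra hne
  exact hm g hgE h hhE ⟨b, hbg, h3 ▸ hch⟩ hne (hfg.symm.trans hfh)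

/-- The status of an edge: a signed coin. -/
def keptE {V : Type*} (rep : Sym2 V → Sym2 V) (sgn : Sym2 V → Bool) (ω : Sym2 V → Bool)
    (f : Sym2 V) : Bool := xor (ω (rep f)) (sgn f)

/-- The edge `e` sees a unique kept edge. -/
def GoodE {V : Type*} (G : SimpleGraph V) (m : Sym2 V → ℕ) (X : Set (Sym2 V))
    (rep : Sym2 V → Sym2 V) (sgn : Sym2 V → Bool) (e : Sym2 V) (ω : Sym2 V → Bool) : Prop :=
  ∃ f ∈ EON G e, f ∈ X ∧ keptE rep sgn ω f = true ∧
    ∀ g ∈ ECN G e, g ∈ X → keptE rep sgn ω g = true → m g = m f → g = f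

theorem bad_step {V : Type*} {G : SimpleGraph V} {m : Sym2 V → ℕ} (hm : ProperE G m)
    {X : Set (Sym2 V)} {rep : Sym2 V → Sym2 V} {sgn : Sym2 V → Bool}
    (hinj : ∀ f g, rep f = rep g → sgn f = sgn g → f = g)
    (hrm : ∀ f g, rep f = rep g → m f = m g)
    {e : Sym2 V} (he : e ∈ G.edgeSet) (A : Finset (Sym2 V))
    (hA : ∀ f ∈ A, f ∈ EON G e ∧ f ∈ X)
    (hAm : ∀ f ∈ A, ∀ g ∈ A, m f = m g → f = g)
    {ω ω' : Sym2 V → Bool} (hω : ¬ GoodE G m X rep sgn e ω) (hω' : ¬ GoodE G m X rep sgn e ω')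
    (hag : ∀ x, (∀ f ∈ A, rep f ≠ x) → ω x = ω' x) {f : Sym2 V} (hf : f ∈ A)
    (hk : keptE rep sgn ω f = true) : keptE rep sgn ω' f = true := by
  obtain ⟨hfE, hfX⟩ := hA f hf
  have : ∃ g ∈ ECN G e, g ∈ X ∧ keptE rep sgn ω g = true ∧ m g = m f ∧ g ≠ f := by
    by_contra hcon
    push Not at hcon
    exact hω ⟨f, hfE, hfX, hk, hcon⟩
  obtain ⟨g, hgE, hgX, hgk, hgm, hgf⟩ := this
  have hEON : ∀ h ∈ ECN G e, m h = m f → h ∈ EON G e := by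
    intro h hh hhm
    refine ⟨hh, ?_⟩
    rintro rfl
    obtain ⟨w, h1, h2⟩ := hfE.1.2
    exact hm h he f hfE.1.1 ⟨w, h2, h1⟩ (fun h' => hfE.2 h'.symm) hhm
  have hr : rep g ≠ rep f := by
    intro hr
    have hs : sgn g ≠ sgn f := fun hs => hgf (hinj _ _ hr hs)
    unfold keptE at hk hgk
    rw [hr] at hgk
    cases h1 : ω (rep f) <;> cases h2 : sgn f <;> cases h3 : sgn g <;> simp_all
  have hrA : ∀ f' ∈ A, rep f' ≠ rep g := by
    intro f' hf' h
    have h1 := hrm _ _ h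
    have h2 := hAm f' hf' f hf (h1.trans hgm)
    exact hr (h2 ▸ h.symm)
  have hgk' : keptE rep sgn ω' g = true := by
    unfold keptE at hgk ⊢
    rw [← hag _ hrA]; exact hgk
  by_contra hnk
  refine hω' ⟨g, hEON g hgE hgm, hgX, hgk', ?_⟩
  intro h hhE hhX hhk hhm
  by_contra hne
  have hhf : h ≠ f := by rintro rfl; exact hnk hhk
  exact hne (three_eq hm hfE (hEON h hhE (hhm.trans hgm)) (hEON g hgE hgm) (hhm.trans hgm).symm
    hgm.symm hhf.symm hgf.symm)

open Classical in
theorem bad_card {V : Type*} [Fintype V] {G : SimpleGraph V} {m : Sym2 V → ℕ} (hm : ProperE G m)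
    {X : Set (Sym2 V)} {rep : Sym2 V → Sym2 V} {sgn : Sym2 V → Bool}
    (hinj : ∀ f g, rep f = rep g → sgn f = sgn g → f = g)
    (hrm : ∀ f g, rep f = rep g → m f = m g)
    {e : Sym2 V} (he : e ∈ G.edgeSet) (A : Finset (Sym2 V))
    (hA : ∀ f ∈ A, f ∈ EON G e ∧ f ∈ X)
    (hAm : ∀ f ∈ A, ∀ g ∈ A, m f = m g → f = g) :
    (Finset.univ.filter (fun ω => ¬ GoodE G m X rep sgn e ω)).card * 2 ^ A.card ≤
      Fintype.card (Sym2 V → Bool) := by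
  have hc : (A.image rep).card = A.card := by
    apply Finset.card_image_of_injOn
    intro f hf g hg h
    exact hAm f hf g hg (hrm _ _ h)
  rw [← hc]
  apply count_card
  intro ω hω ω' hω' hag x hx
  simp only [Finset.mem_filter, Finset.mem_univ, true_and] at hω hω'
  obtain ⟨f, hf, rfl⟩ := Finset.mem_image.1 hx
  have hag' : ∀ x, (∀ f ∈ A, rep f ≠ x) → ω x = ω' x := by
    intro x h
    apply hag
    simpa using h
  have h1 := bad_step hm hinj hrm he A hA hAm hω hω' hag' hf
  have h2 := bad_step hm hinj hrm he A hA hAm hω' hω (fun x h => (hag' x h).symm) hf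
  unfold keptE at h1 h2
  cases h3 : ω (rep f) <;> cases h4 : ω' (rep f) <;> cases h5 : sgn f <;> simp_all

/-- Pairing up of edges around the edges of a set `N`. -/
theorem exists_pairing {V : Type*} {G : SimpleGraph V} {m : Sym2 V → ℕ} (hm : ProperE G m)
    (N : Set (Sym2 V)) (ff : Sym2 V → Sym2 V) (hff : ∀ e ∈ N, ff e ∈ EON G e)
    (huniq : ∀ e ∈ N, ∀ e' ∈ N, ∀ g, g ∈ EON G e → g ∈ EON G e' → e = e') :
    ∃ (rep : Sym2 V → Sym2 V) (sgn : Sym2 V → Bool),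
      (∀ f g, rep f = rep g → sgn f = sgn g → f = g) ∧
      (∀ f g, rep f = rep g → m f = m g) ∧
      ∀ e ∈ N, ∀ g ∈ EON G e, g ≠ ff e → m g = m (ff e) →
        ∀ ω, keptE rep sgn ω g = ! keptE rep sgn ω (ff e) := by
  classical
  let P : Sym2 V → Prop := fun g => ∃ e ∈ N, g ∈ EON G e ∧ g ≠ ff e ∧ m g = m (ff e)
  let rep : Sym2 V → Sym2 V := fun g => if h : P g then ff h.choose else g
  let sgn : Sym2 V → Bool := fun g => decide (P g)
  have hrep : ∀ e ∈ N, ∀ g ∈ EON G e, g ≠ ff e → m g = m (ff e) →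
      rep g = ff e ∧ sgn g = true := by
    intro e he g hg hne hmg
    have hP : P g := ⟨e, he, hg, hne, hmg⟩
    refine ⟨?_, by simp [sgn, hP]⟩
    have : hP.choose = e := huniq _ hP.choose_spec.1 _ he g hP.choose_spec.2.1 hg
    simp only [rep, dif_pos hP, this]
  have hrep0 : ∀ g, ¬ P g → rep g = g ∧ sgn g = false := by
    intro g hP
    exact ⟨by simp only [rep, dif_neg hP], by simp [sgn, hP]⟩
  have hrm0 : ∀ f, m (rep f) = m f := by
    intro f
    by_cases hP : P f
    · obtain ⟨e, he, hg, hne, hmg⟩ := hP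
      rw [(hrep e he f hg hne hmg).1, hmg]
    · rw [(hrep0 f hP).1]
  have hffP : ∀ e ∈ N, ¬ P (ff e) := by
    rintro e he ⟨e', he', hg, hne, -⟩
    have := huniq e he e' he' _ (hff e he) hg
    exact hne (this ▸ rfl)
  refine ⟨rep, sgn, ?_, ?_, ?_⟩
  · intro f g hr hs
    by_cases hPf : P f
    · obtain ⟨e, he, hfE, hfne, hfm⟩ := hPf
      obtain ⟨r1, s1⟩ := hrep e he f hfE hfne hfm
      have hPg : P g := by
        by_contra hPg
        rw [s1, (hrep0 g hPg).2] at hs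
        simp at hs
      obtain ⟨e', he', hgE, hgne, hgm⟩ := hPg
      obtain ⟨r2, s2⟩ := hrep e' he' g hgE hgne hgm
      have hee : e = e' := by
        refine huniq e he e' he' (ff e) (hff e he) ?_
        have : ff e = ff e' := by rw [← r1, ← r2, hr]
        rw [this]; exact hff e' he'
      subst hee
      exact three_eq hm (hff e he) hfE hgE hfm.symm hgm.symm hfne.symm hgne.symm
    · have hPg : ¬ P g := by
        intro hPg
        obtain ⟨e', he', hgE, hgne, hgm⟩ := hPg
        rw [(hrep0 f hPf).2, (hrep e' he' g hgE hgne hgm).2] at hs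
        simp at hs
      rw [← (hrep0 f hPf).1, ← (hrep0 g hPg).1, hr]
  · intro f g h
    rw [← hrm0 f, ← hrm0 g, h]
  · intro e he g hg hne hmg ω
    unfold keptE
    obtain ⟨r1, s1⟩ := hrep e he g hg hne hmg
    obtain ⟨r2, s2⟩ := hrep0 _ (hffP e he)
    rw [r1, s1, r2, s2]
    simp

open Classical in
theorem meet_card {V : Type*} [Fintype V] (F : Finset (Sym2 V)) (d : ℕ)
    (hd : ∀ v, (F.filter (fun f => v ∈ f)).card ≤ d) (e : Sym2 V) :
    (F.filter (fun f => ∃ w, w ∈ f ∧ w ∈ e)).card ≤ 2 * d := by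
  induction e using Sym2.ind with
  | _ u v =>
  have : F.filter (fun f => ∃ w, w ∈ f ∧ w ∈ s(u, v)) ⊆
      F.filter (fun f => u ∈ f) ∪ F.filter (fun f => v ∈ f) := by
    intro f hf
    simp only [Finset.mem_filter, Finset.mem_union, Sym2.mem_iff] at hf ⊢
    obtain ⟨h, w, hw, rfl | rfl⟩ := hf
    · exact Or.inl ⟨h, hw⟩
    · exact Or.inr ⟨h, hw⟩
  have h1 := (Finset.card_le_card this).trans (Finset.card_union_le _ _)
  have := hd u
  have := hd v
  omega

open Classical in
theorem nbr_card {V : Type*} [Fintype V] (X F : Finset (Sym2 V)) (k d : ℕ)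
    (rep : Sym2 V → Sym2 V) (sgn : Sym2 V → Bool)
    (hinj : ∀ f g, rep f = rep g → sgn f = sgn g → f = g)
    (hX : ∀ v, (X.filter (fun f => v ∈ f)).card ≤ k)
    (hF : ∀ v, (F.filter (fun f => v ∈ f)).card ≤ d) (e : Sym2 V) :
    (F.filter (fun e' => ∃ g ∈ X, ∃ g' ∈ X, (∃ w, w ∈ g ∧ w ∈ e) ∧ rep g = rep g' ∧
      ∃ w, w ∈ g' ∧ w ∈ e')).card ≤ 8 * k * d := by
  have hsub : F.filter (fun e' => ∃ g ∈ X, ∃ g' ∈ X, (∃ w, w ∈ g ∧ w ∈ e) ∧ rep g = rep g' ∧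
      ∃ w, w ∈ g' ∧ w ∈ e') ⊆
      (X.filter (fun g => ∃ w, w ∈ g ∧ w ∈ e)).biUnion (fun g =>
        (X.filter (fun g' => rep g = rep g')).biUnion (fun g' =>
          F.filter (fun e' => ∃ w, w ∈ e' ∧ w ∈ g'))) := by
    intro e' he'
    simp only [Finset.mem_filter, Finset.mem_biUnion] at he' ⊢
    obtain ⟨hF', g, hg, g', hg', h1, h2, w, h3, h4⟩ := he'
    exact ⟨g, ⟨hg, h1⟩, g', ⟨hg', h2⟩, hF', w, h4, h3⟩
  refine (Finset.card_le_card hsub).trans ?_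
  have h2 : ∀ g, (X.filter (fun g' => rep g = rep g')).card ≤ 2 := by
    intro g
    have : (X.filter (fun g' => rep g = rep g')).card ≤ (Finset.univ : Finset Bool).card := by
      refine Finset.card_le_card_of_injOn sgn (fun _ _ => Finset.mem_coe.2 (Finset.mem_univ _)) ?_
      intro a ha b hb hab
      simp only [Finset.coe_filter, Set.mem_ofPred_eq] at ha hb
      exact hinj a b (ha.2.symm.trans hb.2) hab
    simpa using this
  have h3 : ∀ g, ((X.filter (fun g' => rep g = rep g')).biUnion (fun g' =>
          F.filter (fun e' => ∃ w, w ∈ e' ∧ w ∈ g'))).card ≤ 2 * (2 * d) := by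
    intro g
    refine (Finset.card_biUnion_le_card_mul _ _ (2 * d) ?_).trans (Nat.mul_le_mul_right _ (h2 g))
    intro g' _
    exact meet_card F d hF g'
  refine (Finset.card_biUnion_le_card_mul _ _ (2 * (2 * d)) (fun g _ => h3 g)).trans ?_
  refine (Nat.mul_le_mul_right _ (meet_card X k hX e)).trans (le_of_eq ?_)
  ring

open Classical in
theorem proper_card {V : Type*} [Fintype V] {G : SimpleGraph V} {m : Sym2 V → ℕ}
    (hm : ProperE G m) (k : ℕ) (X : Finset (Sym2 V))
    (hX : ∀ e ∈ X, e ∈ G.edgeSet ∧ m e < k) (v : V) :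
    (X.filter (fun f => v ∈ f)).card ≤ k := by
  have : (X.filter (fun f => v ∈ f)).card ≤ (Finset.range k).card := by
    refine Finset.card_le_card_of_injOn m ?_ ?_
    · intro f hf
      simp only [Finset.coe_filter, Set.mem_ofPred_eq] at hf
      simpa using (hX f hf.1).2
    · intro f hf g hg h
      simp only [Finset.coe_filter, Set.mem_ofPred_eq] at hf hg
      by_contra hne
      exact hm f (hX f hf.1).1 g (hX g hg.1).1 ⟨v, hf.2, hg.2⟩ hne h
  simpa using this

open Classical in
theorem lll_apply {V : Type*} [Fintype V] {G : SimpleGraph V} {m : Sym2 V → ℕ}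
    (hm : ProperE G m) (k s Δ : ℕ)
    (hΔ : ∀ v, ((Finset.univ.filter (fun e => e ∈ G.edgeSet)).filter (fun f => v ∈ f)).card ≤ Δ)
    (h1 : 64 * k * k ≤ 2 ^ s) (h2 : 64 * k * Δ ≤ 2 ^ (k - s)) (hs : 2 ≤ s) (hks : 2 ≤ k - s)
    (X : Finset (Sym2 V)) (hX : ∀ e ∈ X, e ∈ G.edgeSet ∧ m e < k)
    {rep : Sym2 V → Sym2 V} {sgn : Sym2 V → Bool}
    (hinj : ∀ f g, rep f = rep g → sgn f = sgn g → f = g)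
    (hrm : ∀ f g, rep f = rep g → m f = m g)
    (E : Finset (Sym2 V)) (hE : ∀ e ∈ E, e ∈ G.edgeSet)
    (hA : ∀ e ∈ E, ∃ A : Finset (Sym2 V), (∀ f ∈ A, f ∈ EON G e ∧ f ∈ X) ∧
      (∀ f ∈ A, ∀ g ∈ A, m f = m g → f = g) ∧ (if m e < k then s else k - s) ≤ A.card) :
    ∃ ω, ∀ e ∈ E, GoodE G m (X : Set (Sym2 V)) rep sgn e ω := by
  set t : Sym2 V → ℕ := fun e => if m e < k then s else k - s with ht
  have key : ∃ ω, ∀ e ∈ E, ω ∉ (Finset.univ.filter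
      (fun ω => ¬ GoodE G m (X : Set (Sym2 V)) rep sgn e ω)) := by
    refine lll E (fun e => Finset.univ.filter
        (fun ω => ¬ GoodE G m (X : Set (Sym2 V)) rep sgn e ω))
      (fun e => (X.filter (fun g => ∃ w, w ∈ g ∧ w ∈ e)).image rep) ?_
      (fun e => (1 / 2 : ℝ) ^ t e) ?_ ?_ ?_
    · intro e ω ω' hag h
      simp only [Finset.mem_filter, Finset.mem_univ, true_and] at h ⊢
      have hk : ∀ g ∈ ECN G e, g ∈ (X : Set (Sym2 V)) → keptE rep sgn ω g = keptE rep sgn ω' g := by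
        intro g hg hgX
        unfold keptE
        rw [hag (rep g) (Finset.mem_image_of_mem _ (Finset.mem_filter.2 ⟨hgX, hg.2⟩))]
      rintro ⟨f, hf, hfX, hfk, hfu⟩
      refine h ⟨f, hf, hfX, by rw [hk f hf.1 hfX]; exact hfk, ?_⟩
      intro g hg hgX hgk
      rw [hk g hg hgX] at hgk
      exact hfu g hg hgX hgk
    · intro e he
      obtain ⟨A, hA1, hA2, hA3⟩ := hA e he
      have hb := bad_card hm (X := (X : Set (Sym2 V))) hinj hrm (hE e he) A hA1 hA2
      have hb' : (((Finset.univ.filter (fun ω => ¬ GoodE G m (X : Set (Sym2 V)) rep sgn e ω)).card : ℕ) : ℝ) * 2 ^ (t e) ≤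
        (Fintype.card (Sym2 V → Bool) : ℝ) := by
        refine le_trans (b := ((Finset.univ.filter (fun ω => ¬ GoodE G m (X : Set (Sym2 V)) rep sgn e ω)).card : ℝ) * 2 ^ A.card) ?_ (by exact_mod_cast hb)
        gcongr
        norm_num
      rw [one_div, inv_pow, inv_mul_eq_div, le_div_iff₀ (by positivity)]
      exact hb'
    · intro e he
      have : 2 ≤ t e := by simp only [ht]; split_ifs <;> assumption
      calc (1 / 2 : ℝ) ^ t e ≤ (1 / 2 : ℝ) ^ 2 := by
            apply pow_le_pow_of_le_one <;> norm_num; assumption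
        _ = 1 / 4 := by norm_num
    · intro e he
      set EE := (Finset.univ.filter (fun e => e ∈ G.edgeSet)) with hEE
      set Φ : Sym2 V → Prop := fun e' => ∃ g ∈ X, ∃ g' ∈ X, (∃ w, w ∈ g ∧ w ∈ e) ∧ rep g = rep g' ∧
        ∃ w, w ∈ g' ∧ w ∈ e' with hΦ
      have hXk := proper_card hm k X hX
      have n1 : (EE.filter Φ).card ≤ 8 * k * Δ := nbr_card X EE k Δ rep sgn hinj hXk hΔ e
      have n2 : ((EE.filter (fun f => m f < k)).filter Φ).card ≤ 8 * k * k :=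
        nbr_card X _ k k rep sgn hinj hXk (proper_card hm k _ (by simp [hEE])) e
      have hsub : E.filter (fun j => ¬ Disjoint ((X.filter (fun g => ∃ w, w ∈ g ∧ w ∈ e)).image rep)
          ((X.filter (fun g => ∃ w, w ∈ g ∧ w ∈ j)).image rep)) ⊆ EE.filter Φ := by
        intro j hj
        rw [Finset.mem_filter] at hj ⊢
        refine ⟨by simp [hEE, hE j hj.1], ?_⟩
        obtain ⟨x, hx1, hx2⟩ := Finset.not_disjoint_iff.1 hj.2
        obtain ⟨g, hg, rfl⟩ := Finset.mem_image.1 hx1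
        obtain ⟨g', hg', hgg⟩ := Finset.mem_image.1 hx2
        rw [Finset.mem_filter] at hg hg'
        exact ⟨g, hg.1, g', hg'.1, hg.2, hgg.symm, hg'.2⟩
      refine (Finset.sum_le_sum_of_subset_of_nonneg hsub (fun _ _ _ => by positivity)).trans ?_
      have hle : ∀ j ∈ EE.filter Φ, (1 / 2 : ℝ) ^ t j ≤
          (if m j < k then (1 / 2 : ℝ) ^ s else 0) + (1 / 2 : ℝ) ^ (k - s) := by
        intro j _
        simp only [ht]
        split_ifs
        · have : (0:ℝ) ≤ (1 / 2 : ℝ) ^ (k - s) := by positivity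
          linarith
        · simp
      refine (Finset.sum_le_sum hle).trans ?_
      rw [Finset.sum_add_distrib, ← Finset.sum_filter, Finset.sum_const, Finset.sum_const,
        Finset.filter_filter, nsmul_eq_mul, nsmul_eq_mul]
      rw [Finset.filter_filter] at n2
      have e1 : EE.filter (fun a => Φ a ∧ m a < k) = EE.filter (fun a => m a < k ∧ Φ a) := by
        congr 1; funext a; exact propext and_comm
      rw [e1]
      have n1' : ((EE.filter Φ).card : ℝ) ≤ 8 * k * Δ := by exact_mod_cast n1
      have n2' : ((EE.filter (fun a => m a < k ∧ Φ a)).card : ℝ) ≤ 8 * k * k := by exact_mod_cast n2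
      have h1' : (64 * k * k : ℝ) ≤ 2 ^ s := by exact_mod_cast h1
      have h2' : (64 * k * Δ : ℝ) ≤ 2 ^ (k - s) := by exact_mod_cast h2
      have q1 : ((EE.filter (fun a => m a < k ∧ Φ a)).card : ℝ) * (1 / 2 : ℝ) ^ s ≤ 1 / 8 := by
        rw [one_div, inv_pow, ← div_eq_mul_inv, div_le_iff₀ (by positivity)]
        linarith
      have q2 : ((EE.filter Φ).card : ℝ) * (1 / 2 : ℝ) ^ (k - s) ≤ 1 / 8 := by
        rw [one_div, inv_pow, ← div_eq_mul_inv, div_le_iff₀ (by positivity)]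
        linarith
      linarith
  obtain ⟨ω, hω⟩ := key
  refine ⟨ω, fun e he => ?_⟩
  have := hω e he
  simpa using this

open Classical in
theorem main_comb {V : Type*} [Fintype V] (G : SimpleGraph V) (k s Δ : ℕ)
    (hΔ : ∀ v, ((Finset.univ.filter (fun e => e ∈ G.edgeSet)).filter (fun f => v ∈ f)).card ≤ Δ)
    (h1 : 64 * k * k ≤ 2 ^ s) (h2 : 64 * k * Δ ≤ 2 ^ (k - s)) (hs : 2 ≤ s) (hks : 2 * s < k) :
    ∃ c, ConflictFree G c (k + 2 + (4 * s * s + 1)) := by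
  -- greedy matchings
  obtain ⟨m, hm1, hm2⟩ := grundy
    (fun e f : Sym2 V => e ∈ G.edgeSet ∧ f ∈ G.edgeSet ∧ ∃ w, w ∈ e ∧ w ∈ f)
    (fun a b h => ⟨h.2.1, h.1, by obtain ⟨w, p, q⟩ := h.2.2; exact ⟨w, q, p⟩⟩)
  have hm : ProperE G m := fun e he f hf h => hm1 e f ⟨he, hf, h⟩
  set H : Finset (Sym2 V) := Finset.univ.filter (fun e => e ∈ G.edgeSet ∧ m e < k) with hH
  have memH : ∀ e, e ∈ H ↔ e ∈ G.edgeSet ∧ m e < k := fun e => by simp [hH]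
  set W : V → Prop := fun v => (H.filter (fun f => v ∈ f)).card ≤ s with hW
  set T : Finset (Sym2 V) := Finset.univ.filter (fun e => e ∈ G.edgeSet ∧ ∀ w ∈ e, W w) with hT
  have memT : ∀ e, e ∈ T ↔ e ∈ G.edgeSet ∧ ∀ w ∈ e, W w := fun e => by simp [hT]
  have hEsym : ∀ e f, e ∈ G.edgeSet → f ∈ EON G e → e ∈ EON G f := by
    intro e f he hf
    obtain ⟨⟨hfE, w, p, q⟩, hne⟩ := hf
    exact ⟨⟨he, w, q, p⟩, fun h => hne (h.symm : f = e)⟩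
  -- edges inside W belong to H
  have hTH : T ⊆ H := by
    intro e he
    obtain ⟨heE, heW⟩ := (memT e).1 he
    rw [memH]
    refine ⟨heE, ?_⟩
    by_contra hk
    push Not at hk
    have hch : ∀ j : ℕ, j < k → ∃ f ∈ H, (∃ w, w ∈ f ∧ w ∈ e) ∧ m f = j := by
      intro j hj
      obtain ⟨f, hne, ⟨-, hfE, w, p, q⟩, hfm⟩ := hm2 e j (by omega)
      exact ⟨f, (memH f).2 ⟨hfE, by omega⟩, ⟨w, q, p⟩, hfm⟩
    have hsub : Finset.range k ⊆ (H.filter (fun f => ∃ w, w ∈ f ∧ w ∈ e)).image m := by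
      intro j hj
      obtain ⟨f, hf, hfe, hfm⟩ := hch j (Finset.mem_range.1 hj)
      exact Finset.mem_image.2 ⟨f, Finset.mem_filter.2 ⟨hf, hfe⟩, hfm⟩
    have hc := (Finset.card_le_card hsub).trans Finset.card_image_le
    rw [Finset.card_range] at hc
    have hc2 : (H.filter (fun f => ∃ w, w ∈ f ∧ w ∈ e)).card ≤ 2 * s := by
      induction e using Sym2.ind with
      | _ u v =>
      have : H.filter (fun f => ∃ w, w ∈ f ∧ w ∈ s(u, v)) ⊆
          H.filter (fun f => u ∈ f) ∪ H.filter (fun f => v ∈ f) := by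
        intro f hf
        simp only [Finset.mem_filter, Finset.mem_union, Sym2.mem_iff] at hf ⊢
        obtain ⟨h, w, hw, rfl | rfl⟩ := hf
        · exact Or.inl ⟨h, hw⟩
        · exact Or.inr ⟨h, hw⟩
      have h1 := (Finset.card_le_card this).trans (Finset.card_union_le _ _)
      have hu : (H.filter (fun f => u ∈ f)).card ≤ s := heW u (by simp)
      have hv : (H.filter (fun f => v ∈ f)).card ≤ s := heW v (by simp)
      omega
    omega
  have hTdeg : ∀ v, (T.filter (fun f => v ∈ f)).card ≤ s := by
    intro v
    by_cases hv : W v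
    · exact (Finset.card_le_card (Finset.filter_subset_filter _ hTH)).trans hv
    · rw [Finset.filter_eq_empty_iff.2]
      · simp
      · intro f hf hvf
        exact hv (((memT f).1 hf).2 v hvf)
  -- strong edge colouring of T
  obtain ⟨st, st1, st2⟩ := grundy
    (fun e f : Sym2 V => e ∈ T ∧ f ∈ T ∧ ∃ g ∈ T, (∃ w, w ∈ g ∧ w ∈ e) ∧ (∃ w, w ∈ f ∧ w ∈ g))
    (fun a b h => ⟨h.2.1, h.1, by
      obtain ⟨g, hg, ⟨w, p, q⟩, ⟨w', p', q'⟩⟩ := h.2.2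
      exact ⟨g, hg, ⟨w', q', p'⟩, ⟨w, q, p⟩⟩⟩)
  have hst : ∀ e, st e < 4 * s * s + 1 := by
    intro e
    have hsub : Finset.range (st e) ⊆ ((T.filter (fun g => ∃ w, w ∈ g ∧ w ∈ e)).biUnion
        (fun g => T.filter (fun f => ∃ w, w ∈ f ∧ w ∈ g))).image st := by
      intro j hj
      obtain ⟨f, -, ⟨-, hf, g, hg, hge, hfg⟩, hfj⟩ := st2 e j (Finset.mem_range.1 hj)
      exact Finset.mem_image.2 ⟨f, Finset.mem_biUnion.2 ⟨g, Finset.mem_filter.2 ⟨hg, hge⟩,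
        Finset.mem_filter.2 ⟨hf, hfg⟩⟩, hfj⟩
    have hc := (Finset.card_le_card hsub).trans Finset.card_image_le
    rw [Finset.card_range] at hc
    have hc2 := hc.trans ((Finset.card_biUnion_le_card_mul _ _ (2 * s)
      (fun g _ => meet_card T s hTdeg g)).trans (Nat.mul_le_mul_right _ (meet_card T s hTdeg e)))
    have : 2 * s * (2 * s) = 4 * s * s := by ring
    omega
  -- isolated edges of T
  set N : Set (Sym2 V) := {e | e ∈ T ∧ (EON G e).Nonempty ∧ ∀ f ∈ EON G e, f ∉ T} with hN
  have hff' : ∀ e, ∃ f, e ∈ N → f ∈ EON G e := by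
    intro e
    by_cases he : e ∈ N
    · obtain ⟨f, hf⟩ := he.2.1
      exact ⟨f, fun _ => hf⟩
    · exact ⟨e, fun h => absurd h he⟩
  choose ff hff using hff'
  have huniq : ∀ e ∈ N, ∀ e' ∈ N, ∀ g, g ∈ EON G e → g ∈ EON G e' → e = e' := by
    intro e he e' he' g hg hg'
    have hgT := he.2.2 g hg
    obtain ⟨⟨hgE, x, hxg, hxe⟩, -⟩ := hg
    obtain ⟨⟨-, y, hyg, hye⟩, -⟩ := hg'
    have hxW := ((memT e).1 he.1).2 x hxe
    have hyW := ((memT e').1 he'.1).2 y hye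
    have hxy : x = y := by
      by_contra hne
      apply hgT
      rw [memT]
      refine ⟨hgE, ?_⟩
      have : g = s(x, y) := (Sym2.mem_and_mem_iff hne).1 ⟨hxg, hyg⟩
      rw [this]
      intro w hw
      rcases Sym2.mem_iff.1 hw with rfl | rfl <;> assumption
    subst hxy
    by_contra hne
    refine he.2.2 e' ⟨⟨((memT e').1 he'.1).1, x, hye, hxe⟩, fun h => hne (h.symm : e = e')⟩ he'.1
  obtain ⟨rep, sgn, hinj, hrm, hpair⟩ := exists_pairing hm N ff hff huniq
  set X : Finset (Sym2 V) := H \ T with hX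
  have memX : ∀ e, e ∈ X ↔ e ∈ H ∧ e ∉ T := fun e => by simp [hX]
  set E : Finset (Sym2 V) := Finset.univ.filter (fun e => e ∈ G.edgeSet ∧ e ∉ T) with hE
  have memE : ∀ e, e ∈ E ↔ e ∈ G.edgeSet ∧ e ∉ T := fun e => by simp [hE]
  obtain ⟨ω, hω⟩ := lll_apply hm k s Δ hΔ h1 h2 hs (by omega) X
    (fun e he => (memH e).1 ((memX e).1 he).1) hinj hrm E (fun e he => ((memE e).1 he).1) (by
    intro e he
    obtain ⟨heE, heT⟩ := (memE e).1 he
    have hv : ∃ v ∈ e, ¬ W v := by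
      by_contra hcon
      push Not at hcon
      exact heT ((memT e).2 ⟨heE, hcon⟩)
    obtain ⟨v, hve, hvW⟩ := hv
    by_cases hk : m e < k
    · refine ⟨(H.filter (fun f => v ∈ f)).erase e, ?_, ?_, ?_⟩
      · intro f hf
        rw [Finset.mem_erase, Finset.mem_filter] at hf
        obtain ⟨hne, hfH, hvf⟩ := hf
        exact ⟨⟨⟨((memH f).1 hfH).1, v, hvf, hve⟩, hne⟩, (memX f).2 ⟨hfH, fun h =>
          hvW (((memT f).1 h).2 v hvf)⟩⟩
      · intro f hf g hg hfg
        rw [Finset.mem_erase, Finset.mem_filter] at hf hg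
        by_contra hne
        exact hm f ((memH f).1 hf.2.1).1 g ((memH g).1 hg.2.1).1 ⟨v, hf.2.2, hg.2.2⟩ hne hfg
      · rw [if_pos hk]
        have := Finset.pred_card_le_card_erase (s := H.filter (fun f => v ∈ f)) (a := e)
        simp only [hW, not_le] at hvW
        omega
    · rw [if_neg hk]
      have hch : ∀ j : ℕ, ∃ f, j < k → f ∈ EON G e ∧ m f = j := by
        intro j
        by_cases hj : j < k
        · obtain ⟨f, hne, ⟨-, hfE, w, p, q⟩, hfm⟩ := hm2 e j (by omega)
          exact ⟨f, fun _ => ⟨⟨⟨hfE, w, q, p⟩, hne⟩, hfm⟩⟩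
        · exact ⟨e, fun h => absurd h hj⟩
      choose φ hφ using hch
      have hφinj : Set.InjOn φ (Finset.range k : Set ℕ) := by
        intro i hi j hj hij
        simp only [Finset.coe_range, Set.mem_Iio] at hi hj
        rw [← (hφ i hi).2, ← (hφ j hj).2, hij]
      set A0 := (Finset.range k).image φ with hA0
      have hA0mem : ∀ f ∈ A0, f ∈ EON G e ∧ m f < k ∧ φ (m f) = f := by
        intro f hf
        obtain ⟨j, hj, rfl⟩ := Finset.mem_image.1 hf
        rw [Finset.mem_range] at hj
        obtain ⟨p, q⟩ := hφ j hj
        exact ⟨p, by omega, by rw [q]⟩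
      have hA0c : A0.card = k := by
        rw [hA0, Finset.card_image_of_injOn hφinj, Finset.card_range]
      refine ⟨A0 \ T, ?_, ?_, ?_⟩
      · intro f hf
        rw [Finset.mem_sdiff] at hf
        obtain ⟨p, q, -⟩ := hA0mem f hf.1
        exact ⟨p, (memX f).2 ⟨(memH f).2 ⟨p.1.1, q⟩, hf.2⟩⟩
      · intro f hf g hg hfg
        rw [Finset.mem_sdiff] at hf hg
        rw [← (hA0mem f hf.1).2.2, ← (hA0mem g hg.1).2.2, hfg]
      · obtain ⟨u, rfl⟩ := Sym2.mem_iff_exists.1 hve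
        have hsub : A0 ∩ T ⊆ T.filter (fun f => u ∈ f) := by
          intro f hf
          rw [Finset.mem_inter] at hf
          obtain ⟨p, -, -⟩ := hA0mem f hf.1
          obtain ⟨⟨-, w, hw, hwe⟩, -⟩ := p
          refine Finset.mem_filter.2 ⟨hf.2, ?_⟩
          rcases Sym2.mem_iff.1 hwe with rfl | rfl
          · exact absurd (((memT f).1 hf.2).2 _ hw) hvW
          · exact hw
        have hc := (Finset.card_le_card hsub).trans (hTdeg u)
        have := Finset.card_sdiff_add_card_inter A0 T
        omega)
  -- the final colouring
  set c : Sym2 V → ℕ := fun e => if e ∈ T then k + 2 + st e else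
    if e ∈ H ∧ keptE rep sgn ω e = true then m e else
    if ∃ e' ∈ N, ff e' = e then k else k + 1 with hc
  have cT : ∀ e ∈ T, c e = k + 2 + st e := fun e he => by simp only [hc, if_pos he]
  have cT' : ∀ e, k + 2 ≤ c e → e ∈ T := by
    intro e he
    by_contra hT'
    simp only [hc, if_neg hT'] at he
    split_ifs at he with q1 q2
    · have := ((memH e).1 q1.1).2
      omega
    · omega
    · omega
  have cK : ∀ e, e ∉ T → e ∈ H → keptE rep sgn ω e = true → c e = m e := by
    intro e h1 h2 h3
    simp only [hc, if_neg h1, if_pos (And.intro h2 h3)]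
  have cK' : ∀ e, c e < k → e ∉ T ∧ e ∈ H ∧ keptE rep sgn ω e = true ∧ c e = m e := by
    intro e he
    have hT' : e ∉ T := by
      intro h
      rw [cT e h] at he
      omega
    by_cases q : e ∈ H ∧ keptE rep sgn ω e = true
    · exact ⟨hT', q.1, q.2, cK e hT' q.1 q.2⟩
    · simp only [hc, if_neg hT', if_neg q] at he
      split_ifs at he <;> omega
  have ck : ∀ e, c e = k → e ∉ T ∧ ∃ e' ∈ N, ff e' = e := by
    intro e he
    have hT' : e ∉ T := by
      intro h
      rw [cT e h] at he
      omega
    refine ⟨hT', ?_⟩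
    simp only [hc, if_neg hT'] at he
    split_ifs at he with q1 q2
    · have := ((memH e).1 q1.1).2
      omega
    · exact q2
    · omega
  refine ⟨c, ?_, ?_⟩
  · intro e _
    by_cases hT' : e ∈ T
    · rw [cT e hT']
      have := hst e
      omega
    · have : ¬ (k + 2 ≤ c e) := fun h => hT' (cT' e h)
      omega
  · intro e heE hne
    by_cases heT : e ∈ T
    · by_cases hiso : ∃ f ∈ EON G e, f ∈ T
      · obtain ⟨f, hf, hfT⟩ := hiso
        refine ⟨f, hf, ?_⟩
        intro g hg hcg
        have hgT : g ∈ T := cT' g (by rw [hcg, cT f hfT]; omega)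
        rw [cT f hfT, cT g hgT] at hcg
        by_contra hgf
        obtain ⟨w, p, q⟩ := hf.1.2
        exact st1 g f ⟨hgT, hfT, e, heT, by obtain ⟨w, p, q⟩ := hg.2; exact ⟨w, q, p⟩, w, p, q⟩
          hgf (by omega)
      · push Not at hiso
        have heN : e ∈ N := ⟨heT, hne, hiso⟩
        have hfe := hff e heN
        have hfT := hiso _ hfe
        refine ⟨ff e, hfe, ?_⟩
        intro g hg hcg
        have hgT : g ∉ T → g ∈ EON G e := by
          intro h
          refine ⟨hg, ?_⟩
          intro h'
          have h' : g = e := h'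
          exact h (h' ▸ heT)
        by_cases hkept : ff e ∈ H ∧ keptE rep sgn ω (ff e) = true
        · have e1 := cK _ hfT hkept.1 hkept.2
          have e2 := ((memH _).1 hkept.1).2
          obtain ⟨a1, a2, a3, a4⟩ := cK' g (by omega)
          by_contra hgf
          have := hpair e heN g (hgT a1) hgf (by omega) ω
          rw [hkept.2, a3] at this
          simp at this
        · have e1 : c (ff e) = k := by
            simp only [hc, if_neg hfT, if_neg hkept]
            rw [if_pos ⟨e, heN, rfl⟩]
          obtain ⟨a1, e', he', hg'⟩ := ck g (by omega)
          have := huniq e heN e' he' g (hgT a1) (by rw [← hg']; exact hff e' he')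
          rw [← hg', this]
    · obtain ⟨f, hf, hfX, hfk, hfu⟩ := hω e ((memE e).2 ⟨heE, heT⟩)
      obtain ⟨hfH, hfT⟩ := (memX f).1 hfX
      refine ⟨f, hf, ?_⟩
      intro g hg hcg
      have e1 := cK f hfT hfH hfk
      have e2 := ((memH f).1 hfH).2
      obtain ⟨a1, a2, a3, a4⟩ := cK' g (by omega)
      exact hfu g hg ((memX g).2 ⟨a2, a1⟩) a3 (by omega)

theorem poly_small (η : ℝ) (hη : 0 < η) : ∃ K : ℕ, ∀ k : ℕ, K ≤ k →
    4 * ((6 + 2 * Nat.clog 2 k : ℕ) : ℝ) ^ 2 + 2 * ((6 + 2 * Nat.clog 2 k : ℕ) : ℝ) + 6 ≤ η * k := by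
  have h := tendsto_pow_const_div_const_pow_of_one_lt 2 (r := (2 : ℝ)) (by norm_num)
  have hev := (h.eventually (gt_mem_nhds (show (0:ℝ) < η / 2 / 1000 by positivity))).and
    (Filter.eventually_ge_atTop 1)
  obtain ⟨T, hT⟩ := Filter.eventually_atTop.1 hev
  refine ⟨2 ^ T + 2, fun k hk => ?_⟩
  have hTk : T ≤ Nat.clog 2 k := by
    have h1 : Nat.clog 2 (2 ^ T) ≤ Nat.clog 2 k := Nat.clog_mono_right 2 (by omega)
    rwa [Nat.clog_pow 2 T (by norm_num)] at h1
  obtain ⟨h1, h2⟩ := hT _ hTk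
  have h3 : 2 ^ (Nat.clog 2 k).pred < k := Nat.pow_pred_clog_lt_self (by norm_num) (by have := Nat.one_le_two_pow (n := T); omega)
  have h4 : (2:ℝ) ^ (Nat.clog 2 k) ≤ 2 * k := by
    have : 2 ^ (Nat.clog 2 k) ≤ 2 * k := by
      obtain ⟨t, ht⟩ : ∃ t, Nat.clog 2 k = t + 1 := ⟨Nat.clog 2 k - 1, by omega⟩
      rw [ht] at h3 ⊢
      simp only [Nat.pred_succ] at h3
      rw [pow_succ]; omega
    exact_mod_cast this
  rw [div_lt_iff₀ (by positivity)] at h1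
  have h5 : (1:ℝ) ≤ (Nat.clog 2 k : ℝ) := by exact_mod_cast h2
  push_cast
  generalize (Nat.clog 2 k : ℝ) = t at *
  have h6 : η / 2 / 1000 * (2:ℝ) ^ (Nat.clog 2 k) ≤ η / 2 / 1000 * (2 * k) :=
    mul_le_mul_of_nonneg_left h4 (by positivity)
  nlinarith

theorem numeric (ε : ℝ) (hε : 0 < ε) : ∃ Δε : ℕ, ∀ Δ : ℕ, Δε ≤ Δ → ∃ k s : ℕ,
    64 * k * k ≤ 2 ^ s ∧ 64 * k * Δ ≤ 2 ^ (k - s) ∧ 2 ≤ s ∧ 2 * s < k ∧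
    ((k + 2 + (4 * s * s + 1) : ℕ) : ℝ) ≤ (1 + ε) * Real.logb 2 (Δ : ℝ) := by
  obtain ⟨δ, hδ, hδε⟩ : ∃ δ : ℝ, 0 < δ ∧ ε = 2 * δ := ⟨ε / 2, by positivity, by ring⟩
  obtain ⟨η, hη⟩ : ∃ η : ℝ, η = δ / (1 + δ) := ⟨_, rfl⟩
  have hη0 : 0 < η := by rw [hη]; positivity
  have hη1 : η < 1 := by rw [hη, div_lt_one (by positivity)]; linarith
  have hηδ : η * (1 + δ) = δ := by rw [hη]; field_simp
  obtain ⟨K, hK⟩ := poly_small η hη0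
  refine ⟨2 ^ (K + 1), fun Δ hΔ => ?_⟩
  have hΔ1 : 1 ≤ Δ := le_trans Nat.one_le_two_pow hΔ
  have hΔ0 : (0:ℝ) < Δ := by exact_mod_cast hΔ1
  obtain ⟨L, hL⟩ : ∃ L, L = Real.logb 2 (Δ : ℝ) := ⟨_, rfl⟩
  have hLK : (K + 1 : ℝ) ≤ L := by
    rw [hL, Real.le_logb_iff_rpow_le (by norm_num) hΔ0]
    have : ((2:ℝ) ^ ((K + 1 : ℕ) : ℝ)) ≤ Δ := by
      rw [Real.rpow_natCast]; exact_mod_cast hΔ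
    exact_mod_cast this
  have hK0 : (0:ℝ) ≤ K := by positivity
  have hL0 : 0 < L := by linarith
  rw [← hL]
  obtain ⟨k, hkdef⟩ : ∃ k : ℕ, k = ⌈(1 + δ) * L⌉₊ := ⟨_, rfl⟩
  have hk1 : (1 + δ) * L ≤ k := by rw [hkdef]; exact Nat.le_ceil _
  have hk2 : (k : ℝ) < (1 + δ) * L + 1 := by rw [hkdef]; exact Nat.ceil_lt_add_one (by positivity)
  have hkK : K ≤ k := by
    have : (K : ℝ) ≤ k := by nlinarith
    exact_mod_cast this
  have hp := hK k hkK
  obtain ⟨s, hs⟩ : ∃ s, s = 6 + 2 * Nat.clog 2 k := ⟨_, rfl⟩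
  rw [← hs] at hp
  have hkpos : 1 ≤ k := by
    have : (0:ℝ) < k := by nlinarith
    exact_mod_cast this
  have hkη : η * k ≤ k := by
    have : (0:ℝ) ≤ k := by positivity
    nlinarith
  have hc : k ≤ 2 ^ (Nat.clog 2 k) := Nat.le_pow_clog (by norm_num) k
  have hks : 64 * k * k ≤ 2 ^ s := by
    rw [hs, pow_add, pow_mul', sq]
    calc 64 * k * k = 2 ^ 6 * (k * k) := by ring
      _ ≤ _ := by gcongr
  have h2s : 2 * s < k := by
    have : (2 * s : ℝ) < k := by nlinarith [sq_nonneg (s : ℝ)]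
    exact_mod_cast this
  have hηk : η * k ≤ δ * L + 1 := by
    have : η * k ≤ η * ((1 + δ) * L + 1) := mul_le_mul_of_nonneg_left hk2.le hη0.le
    have h2 : η * ((1 + δ) * L + 1) = δ * L + η := by linear_combination L * hηδ
    linarith
  have hηk' : L ≤ k - η * k := by
    have h1 : (1 - η) * ((1 + δ) * L) ≤ (1 - η) * k := mul_le_mul_of_nonneg_left hk1 (by linarith)
    have h2 : (1 - η) * ((1 + δ) * L) = L := by
      have : (1 - η) * ((1 + δ) * L) = (1 + δ) * L - (η * (1 + δ)) * L := by ring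
      rw [this, hηδ]; ring
    linarith
  refine ⟨k, s, hks, ?_, by omega, h2s, ?_⟩
  · have hΔle : Δ ≤ 2 ^ (k - 2 * s) := by
      have h1 : L ≤ ((k - 2 * s : ℕ) : ℝ) := by
        rw [Nat.cast_sub h2s.le]
        push_cast
        nlinarith [sq_nonneg (s : ℝ)]
      rw [hL, Real.logb_le_iff_le_rpow (by norm_num) hΔ0, Real.rpow_natCast] at h1
      exact_mod_cast h1
    have h64 : 64 * k ≤ 2 ^ s := le_trans (Nat.le_mul_of_pos_right _ hkpos) hks
    calc 64 * k * Δ ≤ 2 ^ s * 2 ^ (k - 2 * s) := Nat.mul_le_mul h64 hΔle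
      _ = 2 ^ (k - s) := by rw [← pow_add]; congr 1; omega
  · push_cast
    rw [hδε]
    have : (0:ℝ) ≤ s := by positivity
    nlinarith

theorem stmt12 (ε : ℝ) (hε : 0 < ε) :
    ∃ Δε : ℕ, ∀ (V : Type) [Fintype V] (G : SimpleGraph V) [DecidableRel G.Adj],
      Δε ≤ G.maxDegree →
      (cfIndex G : ℝ) ≤ (1 + ε) * Real.logb 2 (G.maxDegree : ℝ) := by
  obtain ⟨D, hD⟩ := numeric ε hε
  refine ⟨D, fun V _ G _ hG => ?_⟩
  classical
  obtain ⟨k, s, h1, h2, h3, h4, h5⟩ := hD _ hG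
  obtain ⟨c, hc⟩ := main_comb G k s G.maxDegree (by
    intro v
    refine le_trans (le_of_eq ?_) (G.degree_le_maxDegree v)
    rw [← SimpleGraph.card_incidenceFinset_eq_degree]
    congr 1
    ext f
    simp [SimpleGraph.incidenceSet]) h1 h2 h3 h4
  refine le_trans ?_ h5
  have h6 : cfIndex G ≤ k + 2 + (4 * s * s + 1) := Nat.sInf_le (m := k + 2 + (4 * s * s + 1)) ⟨c, hc⟩
  exact_mod_cast h6
end

section
/- For every graph G with maximum degree Δ > 1, both the closed conflict-free chromatic index χ'_ccf(G) and the open conflict-free chromatic index χ'_ocf(G) are at most (1+o(1)) log₂ Δ; explicitly, for every ε > 0 there exists Δ_ε such that if Δ ≥ Δ_ε then χ'_ccf(G) ≤ (1+ε) log₂ Δ and χ'_ocf(G) ≤ (1+ε) log₂ Δ. -/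
open SimpleGraph

section helpers
open Finset Classical

/-- Maximal partial proper colouring of a finite conflict structure. -/
theorem greedy_partial {α : Type} [Fintype α] (D : α → Prop) (R : α → α → Prop)
    (hR : ∀ a b, R a b → R b a) (k : ℕ) :
    ∃ c : α → Option ℕ, (∀ a i, c a = some i → D a ∧ i < k) ∧
      (∀ a b i, R a b → c a = some i → c b = some i → a = b) ∧
      (∀ a, D a → c a = none → ∀ i < k, ∃ b, c b = some i ∧ R a b) := by
  suffices H : ∀ T : Finset α, ∃ c : α → Option ℕ,
      (∀ a i, c a = some i → (a ∈ T ∧ D a) ∧ i < k) ∧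
      (∀ a b i, R a b → c a = some i → c b = some i → a = b) ∧
      (∀ a ∈ T, D a → c a = none → ∀ i < k, ∃ b, c b = some i ∧ R a b) by
    obtain ⟨c, h1, h2, h3⟩ := H univ
    exact ⟨c, fun a i h => ⟨(h1 a i h).1.2, (h1 a i h).2⟩, h2, fun a => h3 a (mem_univ a)⟩
  intro T
  induction T using Finset.induction_on with
  | empty => exact ⟨fun _ => none, by simp, by simp, by simp⟩
  | insert x T hx ih =>
    obtain ⟨c, h1, h2, h3⟩ := ih
    have hcx : c x = none := by
      by_contra h
      obtain ⟨i, hi⟩ := Option.ne_none_iff_exists'.mp h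
      exact hx (h1 x i hi).1.1
    by_cases hd : D x ∧ ∃ i < k, ∀ b, c b = some i → ¬ R x b
    · obtain ⟨hD, i, hik, hi⟩ := hd
      refine ⟨Function.update c x (some i), ?_, ?_, ?_⟩
      · intro a j h
        by_cases hax : a = x
        · subst hax
          simp at h
          subst h
          exact ⟨⟨by simp, hD⟩, hik⟩
        · rw [Function.update_of_ne hax] at h
          have := h1 a j h
          exact ⟨⟨by simp [this.1.1], this.1.2⟩, this.2⟩
      · intro a b j hab ha hb
        by_cases hax : a = x
        · by_cases hbx : b = x
          · rw [hax, hbx]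
          · subst hax
            rw [Function.update_of_ne hbx] at hb
            simp at ha
            subst ha
            exact absurd hab (hi b hb)
        · rw [Function.update_of_ne hax] at ha
          by_cases hbx : b = x
          · subst hbx
            simp at hb
            subst hb
            exact absurd (hR _ _ hab) (hi a ha)
          · rw [Function.update_of_ne hbx] at hb
            exact h2 a b j hab ha hb
      · intro a haT hDa hca j hj
        by_cases hax : a = x
        · subst hax
          simp at hca
        · rw [Function.update_of_ne hax] at hca
          obtain ⟨b, hb, hab⟩ := h3 a (by simpa [hax] using haT) hDa hca j hj
          refine ⟨b, ?_, hab⟩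
          rw [Function.update_of_ne]
          · exact hb
          · rintro rfl
            simp [hcx] at hb
    · refine ⟨c, ?_, h2, ?_⟩
      · intro a j h
        have := h1 a j h
        exact ⟨⟨by simp [this.1.1], this.1.2⟩, this.2⟩
      · intro a haT hDa hca j hj
        by_cases hax : a = x
        · subst hax
          push Not at hd
          exact hd hDa j hj
        · exact h3 a (by simpa [hax] using haT) hDa hca j hj

/-- Weighted (lopsided) local lemma in counting form. -/
theorem local_lemma {Ω ι : Type} [Fintype Ω] [Nonempty Ω]
    (A : ι → Ω → Prop) (Γ : ι → Finset ι) (p : ι → ℝ)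
    (hp : ∀ i, 0 ≤ p i) (hp4 : ∀ i, p i ≤ 1 / 4)
    (hind : ∀ i (S : Finset ι), (∀ j ∈ S, j ∉ Γ i) →
      ((univ.filter fun ω => A i ω ∧ ∀ j ∈ S, ¬ A j ω).card : ℝ) ≤
        p i * (univ.filter fun ω => ∀ j ∈ S, ¬ A j ω).card)
    (hsum : ∀ i, ∑ j ∈ Γ i, p j ≤ 1 / 4) (S : Finset ι) :
    ∃ ω, ∀ j ∈ S, ¬ A j ω := by
  have key : ∀ n : ℕ, ∀ S : Finset ι, S.card = n → ∀ i,
      ((univ.filter fun ω => A i ω ∧ ∀ j ∈ S, ¬ A j ω).card : ℝ) ≤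
        2 * p i * (univ.filter fun ω => ∀ j ∈ S, ¬ A j ω).card := by
    intro n
    induction n using Nat.strong_induction_on with
    | _ n ih =>
    intro S hS i
    set S1 := S.filter (fun j => j ∈ Γ i) with hS1
    set S2 := S.filter (fun j => j ∉ Γ i) with hS2
    have h2 := hind i S2 (by intro j hj; exact (mem_filter.mp hj).2)
    set N2 : ℝ := ((univ.filter fun ω => ∀ j ∈ S2, ¬ A j ω).card : ℝ) with hN2
    have hle : ((univ.filter fun ω => A i ω ∧ ∀ j ∈ S, ¬ A j ω).card : ℝ) ≤ p i * N2 := by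
      refine le_trans ?_ h2
      exact_mod_cast card_le_card (by
        intro ω hω
        simp only [mem_filter, mem_univ, true_and] at hω ⊢
        exact ⟨hω.1, fun j hj => hω.2 j (mem_filter.mp hj).1⟩)
    have hhalf : N2 ≤ 2 * ((univ.filter fun ω => ∀ j ∈ S, ¬ A j ω).card : ℝ) := by
      have hN2pos : 0 ≤ N2 := by positivity
      by_cases hne : S1.Nonempty
      · have hlt : S2.card < n := by
          rw [← hS, hS2]
          obtain ⟨j, hj⟩ := hne
          apply card_lt_card
          refine ⟨filter_subset _ _, fun hsub => ?_⟩
          have h1 := mem_filter.mp hj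
          exact (mem_filter.mp (hsub h1.1)).2 h1.2
        have hcov : N2 ≤ ((univ.filter fun ω => ∀ j ∈ S, ¬ A j ω).card : ℝ) +
            ∑ j ∈ S1, ((univ.filter fun ω => A j ω ∧ ∀ l ∈ S2, ¬ A l ω).card : ℝ) := by
          have : (univ.filter fun ω => ∀ j ∈ S2, ¬ A j ω) ⊆
              (univ.filter fun ω => ∀ j ∈ S, ¬ A j ω) ∪
              S1.biUnion (fun j => univ.filter fun ω => A j ω ∧ ∀ l ∈ S2, ¬ A l ω) := by
            intro ω hω
            simp only [mem_filter, mem_univ, true_and] at hω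
            simp only [mem_union, mem_biUnion, mem_filter, mem_univ, true_and]
            by_cases h : ∀ j ∈ S, ¬ A j ω
            · exact Or.inl h
            · push Not at h
              obtain ⟨j, hj, hA⟩ := h
              refine Or.inr ⟨j, ?_, hA, hω⟩
              by_contra hj1
              have : j ∉ Γ i := fun hg => hj1 (mem_filter.mpr ⟨hj, hg⟩)
              exact hω j (mem_filter.mpr ⟨hj, this⟩) hA
          have h3 := (card_le_card this).trans ((card_union_le _ _).trans
            (Nat.add_le_add_left card_biUnion_le _))
          rw [hN2]
          exact_mod_cast h3
        have hsm : ∑ j ∈ S1, ((univ.filter fun ω => A j ω ∧ ∀ l ∈ S2, ¬ A l ω).card : ℝ) ≤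
            ∑ j ∈ S1, 2 * p j * N2 := sum_le_sum fun j _ => ih _ hlt S2 rfl j
        rw [← sum_mul, ← mul_sum] at hsm
        have hs4 : ∑ j ∈ S1, p j ≤ 1 / 4 := by
          refine le_trans (sum_le_sum_of_subset_of_nonneg ?_ (fun j _ _ => hp j)) (hsum i)
          intro j hj
          exact (mem_filter.mp hj).2
        nlinarith
      · have : S2 = S := by
          rw [hS2]
          apply filter_true_of_mem
          intro j hj hg
          exact hne ⟨j, mem_filter.mpr ⟨hj, hg⟩⟩
        rw [hN2, this]
        have : (0 : ℝ) ≤ ((univ.filter fun ω => ∀ j ∈ S, ¬ A j ω).card : ℝ) := by positivity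
        linarith
    have := mul_le_mul_of_nonneg_left hhalf (hp i)
    linarith
  have pos : 0 < (univ.filter fun ω => ∀ j ∈ S, ¬ A j ω).card := by
    induction S using Finset.induction_on with
    | empty =>
      simp only [notMem_empty, false_imp_iff, implies_true, filter_true]
      exact Finset.card_pos.mpr univ_nonempty
    | insert i S hi ih =>
      have hk := key _ S rfl i
      have hsplit : (univ.filter fun ω => ∀ j ∈ S, ¬ A j ω).card ≤
          (univ.filter fun ω => ∀ j ∈ insert i S, ¬ A j ω).card +
          (univ.filter fun ω => A i ω ∧ ∀ j ∈ S, ¬ A j ω).card := by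
        refine le_trans (card_le_card ?_) (card_union_le _ _)
        intro ω hω
        simp only [mem_filter, mem_univ, true_and, mem_union, mem_insert] at hω ⊢
        by_cases h : A i ω
        · exact Or.inr ⟨h, hω⟩
        · left
          rintro j (rfl | hj)
          · exact h
          · exact hω j hj
      have hsplit' : ((univ.filter fun ω => ∀ j ∈ S, ¬ A j ω).card : ℝ) ≤
          (univ.filter fun ω => ∀ j ∈ insert i S, ¬ A j ω).card +
          (univ.filter fun ω => A i ω ∧ ∀ j ∈ S, ¬ A j ω).card := by exact_mod_cast hsplit
      have hpos : (0 : ℝ) < ((univ.filter fun ω => ∀ j ∈ S, ¬ A j ω).card : ℝ) := by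
        exact_mod_cast ih
      have : (0 : ℝ) < ((univ.filter fun ω => ∀ j ∈ insert i S, ¬ A j ω).card : ℝ) := by
        nlinarith [hp4 i]
      exact_mod_cast this
  obtain ⟨ω, hω⟩ := Finset.card_pos.mp pos
  exact ⟨ω, (mem_filter.mp hω).2⟩

/-- Independence estimate: `A` is determined on `Y` by the values outside `Y`. -/
theorem indep_count {X : Type} [Fintype X] (A Gd : (X → Bool) → Prop) (Y : Finset X)
    (huniq : ∀ ω ω', A ω → A ω' → (∀ x, x ∉ Y → ω x = ω' x) → ω = ω')
    (hinv : ∀ ω ω', (∀ x, x ∉ Y → ω x = ω' x) → Gd ω → Gd ω') :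
    (univ.filter fun ω => A ω ∧ Gd ω).card * 2 ^ Y.card ≤ (univ.filter fun ω => Gd ω).card := by
  have h1 : (univ.filter fun ω => A ω ∧ Gd ω).card * 2 ^ Y.card =
      ((univ.filter fun ω => A ω ∧ Gd ω) ×ˢ (univ : Finset (Y → Bool))).card := by
    rw [card_product]
    simp
  rw [h1]
  apply card_le_card_of_injOn
    (fun q : (X → Bool) × (Y → Bool) => fun x => if h : x ∈ Y then q.2 ⟨x, h⟩ else q.1 x)
  · rintro ⟨ω, τ⟩ hq
    simp only [coe_product, Set.mem_prod, mem_coe, mem_filter, mem_univ, true_and] at hq ⊢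
    refine hinv ω _ ?_ hq.1.2
    intro x hx
    simp [hx]
  · rintro ⟨ω, τ⟩ hq ⟨ω', τ'⟩ hq' heq
    simp only [coe_product, Set.mem_prod, mem_coe, mem_filter, mem_univ, true_and] at hq hq' heq
    have e1 : ω = ω' := by
      apply huniq _ _ hq.1.1 hq'.1.1
      intro x hx
      have := congrFun heq x
      simpa [hx] using this
    have e2 : τ = τ' := by
      funext ⟨x, hx⟩
      have := congrFun heq x
      simpa [hx] using this
    rw [e1, e2]

/-- Two (unordered) pairs share a vertex. -/
def Tch {V : Type} (e f : Sym2 V) : Prop := ∃ w, w ∈ e ∧ w ∈ f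

theorem Tch.symm {V : Type} {e f : Sym2 V} (h : Tch e f) : Tch f e :=
  let ⟨w, h1, h2⟩ := h
  ⟨w, h2, h1⟩

theorem tch_mk {V : Type} {f : Sym2 V} {x y : V} : Tch f s(x, y) ↔ x ∈ f ∨ y ∈ f := by
  constructor
  · rintro ⟨w, h1, h2⟩
    rcases Sym2.mem_iff.mp h2 with rfl | rfl
    · exact Or.inl h1
    · exact Or.inr h1
  · rintro (h | h)
    · exact ⟨x, h, Sym2.mem_mk_left _ _⟩
    · exact ⟨y, h, Sym2.mem_mk_right _ _⟩

/-- Edges of `G` at `v`. -/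
noncomputable def eAt {V : Type} [Fintype V] (G : SimpleGraph V) (v : V) : Finset (Sym2 V) :=
  univ.filter fun e => e ∈ G.edgeSet ∧ v ∈ e

/-- Indexed edges at `v`. -/
noncomputable def nAt {V : Type} [Fintype V] (c : Sym2 V → Option ℕ) (v : V) :
    Finset (Sym2 V) :=
  univ.filter fun e => c e ≠ none ∧ v ∈ e

/-- `v` has few indexed edges. -/
def Low {V : Type} [Fintype V] (c : Sym2 V → Option ℕ) (t : ℕ) (v : V) : Prop :=
  (nAt c v).card < t

/-- Both ends are low. -/
def LL {V : Type} [Fintype V] (c : Sym2 V → Option ℕ) (t : ℕ) (e : Sym2 V) : Prop :=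
  ∀ v ∈ e, Low c t v

/-- Active edges. -/
def Act {V : Type} [Fintype V] (c : Sym2 V → Option ℕ) (t : ℕ) (e : Sym2 V) : Prop :=
  c e ≠ none ∧ ¬ LL c t e

/-- `f` is an active edge of index `i`, switched on, touching `e`. -/
def OnE {V : Type} [Fintype V] (c : Sym2 V → Option ℕ) (t : ℕ) (ω : Sym2 V → Bool)
    (e : Sym2 V) (i : ℕ) (f : Sym2 V) : Prop :=
  Tch f e ∧ Act c t f ∧ c f = some i ∧ ω f = true

/-- `e` is satisfied by the random colouring. -/
def SatR {V : Type} [Fintype V] (c : Sym2 V → Option ℕ) (t : ℕ) (ω : Sym2 V → Bool)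
    (e : Sym2 V) : Prop :=
  ∃ i f, f ≠ e ∧ OnE c t ω e i f ∧ ∀ f', OnE c t ω e i f' → f' = f

/-- The coordinates used in the independence estimate. -/
noncomputable def Yset {V : Type} [Fintype V] (c : Sym2 V → Option ℕ) (t : ℕ) (x y : V) :
    Finset (Sym2 V) :=
  univ.filter fun f => Act c t f ∧ f ≠ s(x, y) ∧
    (x ∈ f ∨ (y ∈ f ∧ ∀ g, Act c t g → x ∈ g → c g ≠ c f))

theorem nAt_card_le {V : Type} [Fintype V] (c : Sym2 V → Option ℕ) (k : ℕ)
    (hk : ∀ e i, c e = some i → i < k)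
    (hm : ∀ e f i v, v ∈ e → v ∈ f → c e = some i → c f = some i → e = f) (v : V) :
    (nAt c v).card ≤ k := by
  have : (nAt c v).card ≤ ((range k).image some).card := by
    apply card_le_card_of_injOn c
    · intro e he
      simp only [nAt, coe_filter, mem_univ, true_and, Set.mem_ofPred_eq] at he
      obtain ⟨i, hi⟩ := Option.ne_none_iff_exists'.mp he.1
      rw [hi]
      simp [hk e i hi]
    · intro e he f hf hef
      simp only [nAt, coe_filter, mem_univ, true_and, Set.mem_ofPred_eq] at he hf
      obtain ⟨i, hi⟩ := Option.ne_none_iff_exists'.mp he.1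
      exact hm e f i v he.2 hf.2 hi (hef ▸ hi)
  exact this.trans (card_image_le.trans (by simp))

theorem yset_aux {V : Type} [Fintype V] (c : Sym2 V → Option ℕ) (t : ℕ)
    (hm : ∀ e f i v, v ∈ e → v ∈ f → c e = some i → c f = some i → e = f) (x y : V)
    (ω ω' : Sym2 V → Bool) (h : ¬ SatR c t ω s(x, y)) (h' : ¬ SatR c t ω' s(x, y))
    (hag : ∀ f, f ∉ Yset c t x y → ω f = ω' f) (f : Sym2 V) (hf : f ∈ Yset c t x y)
    (hon : ω f = true) : ω' f = true := by
  simp only [Yset, mem_filter, mem_univ, true_and] at hf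
  obtain ⟨ha, hne, hxy⟩ := hf
  obtain ⟨i, hi⟩ := Option.ne_none_iff_exists'.mp ha.1
  have hOn : OnE c t ω s(x, y) i f := by
    refine ⟨tch_mk.mpr ?_, ha, hi, hon⟩
    rcases hxy with h | h
    · exact Or.inl h
    · exact Or.inr h.1
  have h2 : ∃ g, OnE c t ω s(x, y) i g ∧ g ≠ f := by
    by_contra hcon
    push Not at hcon
    exact h ⟨i, f, hne, hOn, hcon⟩
  obtain ⟨g, hg, hgf⟩ := h2
  obtain ⟨hgt, hga, hgi, hgω⟩ := hg
  rcases hxy with hx | ⟨hy, hno⟩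
  · have hxg : x ∉ g := fun hxg => hgf (hm g f i x hxg hx hgi hi)
    have hyg : y ∈ g := (tch_mk.mp hgt).resolve_left hxg
    have hgY : g ∉ Yset c t x y := by
      simp only [Yset, mem_filter, mem_univ, true_and]
      rintro ⟨_, _, h1 | h1⟩
      · exact hxg h1
      · exact h1.2 f ha hx (hi.trans hgi.symm)
    have hgω' : ω' g = true := by rw [← hag g hgY]; exact hgω
    by_contra hoff
    apply h'
    refine ⟨i, g, ?_, ⟨hgt, hga, hgi, hgω'⟩, ?_⟩
    · rintro rfl
      exact hxg (Sym2.mem_mk_left _ _)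
    · rintro f' ⟨h1, h2, h3, h4⟩
      rcases tch_mk.mp h1 with h5 | h5
      · have : f' = f := hm f' f i x h5 hx h3 hi
        rw [this] at h4
        exact absurd h4 hoff
      · exact hm f' g i y h5 hyg h3 hgi
  · exfalso
    rcases tch_mk.mp hgt with h5 | h5
    · exact hno g hga h5 (hgi.trans hi.symm)
    · exact hgf (hm g f i y h5 hy hgi hi)

theorem random_step {V : Type} [Fintype V] (G : SimpleGraph V) (c : Sym2 V → Option ℕ)
    (t k Δ : ℕ)
    (hE : ∀ e i, c e = some i → e ∈ G.edgeSet ∧ i < k)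
    (hm : ∀ e f i v, v ∈ e → v ∈ f → c e = some i → c f = some i → e = f)
    (hΔ : ∀ v, (eAt G v).card ≤ Δ)
    (hcard : ∀ x y, s(x, y) ∈ G.edgeSet → ¬ Low c t x →
      (if c s(x, y) = none then k - 2 * t else t - 1) ≤ (Yset c t x y).card)
    (hk1 : 1 ≤ k) (hΔ1 : 1 ≤ Δ)
    (hn1 : 4 * (k : ℝ) * Δ * (1 / 2) ^ (k - 2 * t) ≤ 1 / 8)
    (hn2 : 4 * (k : ℝ) * k * (1 / 2) ^ (t - 1) ≤ 1 / 8) :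
    ∃ ω : Sym2 V → Bool, ∀ e ∈ G.edgeSet, ¬ LL c t e → SatR c t ω e := by
  set A : Sym2 V → (Sym2 V → Bool) → Prop := fun e ω =>
    (e ∈ G.edgeSet ∧ ¬ LL c t e) ∧ ¬ SatR c t ω e with hA
  set Γ : Sym2 V → Finset (Sym2 V) := fun e =>
    univ.filter fun e' => ∃ f, c f ≠ none ∧ Tch f e ∧ Tch f e' with hΓ
  set p : Sym2 V → ℝ := fun e =>
    if e ∈ G.edgeSet ∧ ¬ LL c t e then
      (if c e = none then (1 / 2 : ℝ) ^ (k - 2 * t) else (1 / 2) ^ (t - 1)) else 0 with hp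
  have hkR : (1 : ℝ) ≤ k := by exact_mod_cast hk1
  have hΔR : (1 : ℝ) ≤ Δ := by exact_mod_cast hΔ1
  have p1 : (0 : ℝ) < (1 / 2 : ℝ) ^ (k - 2 * t) := by positivity
  have p2 : (0 : ℝ) < (1 / 2 : ℝ) ^ (t - 1) := by positivity
  have q1 : (1 / 2 : ℝ) ^ (k - 2 * t) ≤ 1 / 4 := by
    have : 1 * (1 / 2 : ℝ) ^ (k - 2 * t) ≤ 4 * (k : ℝ) * Δ * (1 / 2) ^ (k - 2 * t) := by
      apply mul_le_mul_of_nonneg_right _ p1.le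
      nlinarith
    linarith
  have q2 : (1 / 2 : ℝ) ^ (t - 1) ≤ 1 / 4 := by
    have : 1 * (1 / 2 : ℝ) ^ (t - 1) ≤ 4 * (k : ℝ) * k * (1 / 2) ^ (t - 1) := by
      apply mul_le_mul_of_nonneg_right _ p2.le
      nlinarith
    linarith
  have hnk : ∀ v, (nAt c v).card ≤ k := nAt_card_le c k (fun e i h => (hE e i h).2) hm
  have main := local_lemma A Γ p ?_ ?_ ?_ ?_ univ
  · obtain ⟨ω, hω⟩ := main
    refine ⟨ω, fun e he hl => ?_⟩
    by_contra hs
    exact hω e (mem_univ e) ⟨⟨he, hl⟩, hs⟩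
  · intro e
    simp only [hp]
    split_ifs <;> positivity
  · intro e
    simp only [hp]
    split_ifs
    · exact q1
    · exact q2
    · norm_num
  · intro e S hS
    by_cases he : e ∈ G.edgeSet ∧ ¬ LL c t e
    · obtain ⟨heG, hnl⟩ := id he
      obtain ⟨x, hxe, hx⟩ : ∃ x ∈ e, ¬ Low c t x := by
        simpa [LL] using hnl
      obtain ⟨y, rfl⟩ := Sym2.mem_iff_exists.mp hxe
      have hc := hcard x y heG hx
      have hcount := indep_count (A s(x, y)) (fun ω => ∀ j ∈ S, ¬ A j ω) (Yset c t x y) ?_ ?_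
      · set r := (if c s(x, y) = none then k - 2 * t else t - 1) with hr
        have hpr : p s(x, y) = (1 / 2 : ℝ) ^ r := by
          simp only [hp, hr]
          rw [if_pos he]
          split_ifs <;> rfl
        rw [hpr]
        have h2 : (univ.filter fun ω => A s(x, y) ω ∧ ∀ j ∈ S, ¬ A j ω).card * 2 ^ r ≤
            (univ.filter fun ω => ∀ j ∈ S, ¬ A j ω).card :=
          le_trans (Nat.mul_le_mul_left _ (Nat.pow_le_pow_right (by norm_num) hc))
            (by convert hcount; rfl)
        have h3 : ((univ.filter fun ω => A s(x, y) ω ∧ ∀ j ∈ S, ¬ A j ω).card : ℝ) * 2 ^ r ≤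
            ((univ.filter fun ω => ∀ j ∈ S, ¬ A j ω).card : ℝ) := by exact_mod_cast h2
        rw [one_div, inv_pow, inv_mul_eq_div, le_div_iff₀ (by positivity)]
        convert h3; rfl
      · intro ω ω' h1 h2 hag
        funext f
        by_cases hf : f ∈ Yset c t x y
        · rw [Bool.eq_iff_iff]
          exact ⟨yset_aux c t hm x y ω ω' h1.2 h2.2 hag f hf,
            yset_aux c t hm x y ω' ω h2.2 h1.2 (fun g hg => (hag g hg).symm) f hf⟩
        · exact hag f hf
      · intro ω ω' hag hgood j hj hAj
        apply hgood j hj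
        refine ⟨hAj.1, fun hsat => hAj.2 ?_⟩
        have hiff : ∀ i f, OnE c t ω j i f ↔ OnE c t ω' j i f := by
          intro i f
          have : Tch f j → Act c t f → ω f = ω' f := by
            intro hfj hfa
            apply hag
            intro hfY
            simp only [Yset, mem_filter, mem_univ, true_and] at hfY
            apply hS j hj
            simp only [hΓ, mem_filter, mem_univ, true_and]
            refine ⟨f, hfa.1, tch_mk.mpr ?_, hfj⟩
            rcases hfY.2.2 with h | h
            · exact Or.inl h
            · exact Or.inr h.1
          constructor
          · rintro ⟨h1, h2, h3, h4⟩
            exact ⟨h1, h2, h3, this h1 h2 ▸ h4⟩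
          · rintro ⟨h1, h2, h3, h4⟩
            exact ⟨h1, h2, h3, (this h1 h2).symm ▸ h4⟩
        obtain ⟨i, f, h1, h2, h3⟩ := hsat
        exact ⟨i, f, h1, (hiff i f).mp h2, fun f' hf' => h3 f' ((hiff i f').mpr hf')⟩
    · have hp0 : p e = 0 := by simp only [hp, if_neg he]
      rw [hp0, zero_mul]
      refine le_of_eq ?_
      rw [Nat.cast_eq_zero, card_eq_zero, eq_empty_iff_forall_notMem]
      intro ω hω
      simp only [mem_filter, mem_univ, true_and] at hω
      exact he hω.1.1
  · intro e
    induction e using Sym2.ind with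
    | _ x y =>
    -- neighbours among all edges, and among indexed edges
    have hb : ∀ (B : V → Finset (Sym2 V)) (b : ℕ), (∀ v, (B v).card ≤ b) →
        ((nAt c x ∪ nAt c y).biUnion fun f => univ.filter fun e' => ∃ v ∈ f, e' ∈ B v).card
          ≤ (k + k) * (2 * b) := by
      intro B b hB
      refine (card_biUnion_le_card_mul _ _ (2 * b) ?_).trans ?_
      · intro f _
        induction f using Sym2.ind with
        | _ u v =>
        have : (univ.filter fun e' => ∃ w ∈ s(u, v), e' ∈ B w) ⊆ B u ∪ B v := by
          intro e' he'
          simp only [mem_filter, mem_univ, true_and] at he'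
          obtain ⟨w, hw, hw'⟩ := he'
          rcases Sym2.mem_iff.mp hw with rfl | rfl
          · exact mem_union_left _ hw'
          · exact mem_union_right _ hw'
        have h1 := (card_le_card this).trans (card_union_le _ _)
        have := hB u
        have := hB v
        omega
      · apply Nat.mul_le_mul_right
        have := card_union_le (nAt c x) (nAt c y)
        have := hnk x
        have := hnk y
        omega
    set E1 := (Γ s(x, y)).filter fun e' => e' ∈ G.edgeSet with hE1
    set E2 := (Γ s(x, y)).filter fun e' => c e' ≠ none with hE2
    have hc1 : E1.card ≤ (k + k) * (2 * Δ) := by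
      refine (card_le_card ?_).trans (hb (eAt G) Δ hΔ)
      intro e' he'
      simp only [hE1, hΓ, mem_filter, mem_univ, true_and] at he'
      obtain ⟨⟨f, hf1, hf2, w, hw1, hw2⟩, he⟩ := he'
      simp only [mem_biUnion, mem_union, nAt, eAt, mem_filter, mem_univ, true_and]
      refine ⟨f, ?_, w, hw1, he, hw2⟩
      rcases tch_mk.mp hf2 with h | h
      · exact Or.inl ⟨hf1, h⟩
      · exact Or.inr ⟨hf1, h⟩
    have hc2 : E2.card ≤ (k + k) * (2 * k) := by
      refine (card_le_card ?_).trans (hb (nAt c) k hnk)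
      intro e' he'
      simp only [hE2, hΓ, mem_filter, mem_univ, true_and] at he'
      obtain ⟨⟨f, hf1, hf2, w, hw1, hw2⟩, he⟩ := he'
      simp only [mem_biUnion, mem_union, nAt, mem_filter, mem_univ, true_and]
      refine ⟨f, ?_, w, hw1, he, hw2⟩
      rcases tch_mk.mp hf2 with h | h
      · exact Or.inl ⟨hf1, h⟩
      · exact Or.inr ⟨hf1, h⟩
    have hsum : ∑ j ∈ Γ s(x, y), p j ≤
        ∑ j ∈ Γ s(x, y), ((if j ∈ G.edgeSet then (1 / 2 : ℝ) ^ (k - 2 * t) else 0) +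
          (if c j ≠ none then (1 / 2 : ℝ) ^ (t - 1) else 0)) := by
      apply sum_le_sum
      intro j _
      simp only [hp]
      by_cases h1 : j ∈ G.edgeSet <;> by_cases h2 : c j = none <;> by_cases h3 : LL c t j <;>
        simp only [h1, h2, h3, ne_eq, not_true_eq_false, not_false_eq_true, and_true, and_false,
          if_true, if_false] <;> linarith
    have s1 : ∑ j ∈ Γ s(x, y), (if j ∈ G.edgeSet then (1 / 2 : ℝ) ^ (k - 2 * t) else 0) =
        E1.card * (1 / 2 : ℝ) ^ (k - 2 * t) := by
      rw [← sum_filter, sum_const, nsmul_eq_mul]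
    have s2 : ∑ j ∈ Γ s(x, y), (if c j ≠ none then (1 / 2 : ℝ) ^ (t - 1) else 0) =
        E2.card * (1 / 2 : ℝ) ^ (t - 1) := by
      rw [← sum_filter, sum_const, nsmul_eq_mul]
    rw [sum_add_distrib, s1, s2] at hsum
    have hc1' : (E1.card : ℝ) ≤ (k + k) * (2 * Δ) := by exact_mod_cast hc1
    have hc2' : (E2.card : ℝ) ≤ (k + k) * (2 * k) := by exact_mod_cast hc2
    have m1 := mul_le_mul_of_nonneg_right hc1' p1.le
    have m2 := mul_le_mul_of_nonneg_right hc2' p2.le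
    calc _ ≤ _ := hsum
      _ ≤ (k + k) * (2 * Δ) * (1 / 2 : ℝ) ^ (k - 2 * t) +
          (k + k) * (2 * k) * (1 / 2 : ℝ) ^ (t - 1) := add_le_add m1 m2
      _ = 4 * (k : ℝ) * Δ * (1 / 2) ^ (k - 2 * t) + 4 * (k : ℝ) * k * (1 / 2) ^ (t - 1) := by ring
      _ ≤ 1 / 4 := by linarith

/-- Special edges: both ends have small degree, no adjacent edge has this property. -/
def SS {V : Type} [Fintype V] (G : SimpleGraph V) (t : ℕ) (q : Sym2 V) : Prop :=
  q ∈ G.edgeSet ∧ (∀ a ∈ q, (eAt G a).card < t) ∧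
    ∀ q' ∈ G.edgeSet, q' ≠ q → Tch q' q → ∃ a ∈ q', t ≤ (eAt G a).card

/-- Conflict relation for the indexing of edges. -/
def RR {V : Type} [Fintype V] (G : SimpleGraph V) (t : ℕ) (e f : Sym2 V) : Prop :=
  Tch e f ∨ ∃ q, SS G t q ∧ Tch e q ∧ Tch q f

/-- Indexed edges at `x` or at the special partner of `x`. -/
noncomputable def bAt {V : Type} [Fintype V] (G : SimpleGraph V) (c : Sym2 V → Option ℕ) (t : ℕ)
    (x : V) : Finset (Sym2 V) :=
  nAt c x ∪ univ.filter fun g => c g ≠ none ∧ ∃ q, SS G t q ∧ x ∈ q ∧ Tch q g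

theorem SS.unique {V : Type} [Fintype V] {G : SimpleGraph V} {t : ℕ} {q q' : Sym2 V} {x : V}
    (h : SS G t q) (h' : SS G t q') (hx : x ∈ q) (hx' : x ∈ q') : q' = q := by
  by_contra hne
  obtain ⟨a, ha, hta⟩ := h.2.2 q' h'.1 hne ⟨x, hx', hx⟩
  have := h'.2.1 a ha
  omega

theorem index_count {V : Type} (c : Sym2 V → Option ℕ) (k : ℕ) (B : Finset (Sym2 V))
    (h : ∀ i < k, ∃ g ∈ B, c g = some i) : k ≤ B.card := by
  have : range k ⊆ B.image (fun g => (c g).getD 0) := by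
    intro i hi
    obtain ⟨g, hg, hgi⟩ := h i (mem_range.mp hi)
    exact mem_image.mpr ⟨g, hg, by simp [hgi]⟩
  have := (card_le_card this).trans card_image_le
  simpa using this

section struct
variable {V : Type} [Fintype V] {G : SimpleGraph V} {c : Sym2 V → Option ℕ} {t k : ℕ}

theorem nAt_le_eAt (hE : ∀ e i, c e = some i → (e ∈ G.edgeSet ∧ ¬ SS G t e) ∧ i < k) (x : V) :
    nAt c x ⊆ eAt G x := by
  intro e he
  simp only [nAt, eAt, mem_filter, mem_univ, true_and] at he ⊢
  obtain ⟨i, hi⟩ := Option.ne_none_iff_exists'.mp he.1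
  exact ⟨(hE e i hi).1.1, he.2⟩

theorem SS.low (hE : ∀ e i, c e = some i → (e ∈ G.edgeSet ∧ ¬ SS G t e) ∧ i < k)
    {q : Sym2 V} (h : SS G t q) {x : V} (hx : x ∈ q) : Low c t x :=
  lt_of_le_of_lt (card_le_card (nAt_le_eAt hE x)) (h.2.1 x hx)

theorem bAt_high (hE : ∀ e i, c e = some i → (e ∈ G.edgeSet ∧ ¬ SS G t e) ∧ i < k)
    {x : V} (hx : ¬ Low c t x) : bAt G c t x = nAt c x := by
  apply union_eq_left.mpr
  intro g hg
  simp only [mem_filter, mem_univ, true_and] at hg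
  obtain ⟨_, q, hq, hxq, _⟩ := hg
  exact absurd (hq.low hE hxq) hx

theorem bAt_low (hE : ∀ e i, c e = some i → (e ∈ G.edgeSet ∧ ¬ SS G t e) ∧ i < k)
    {x : V} (hx : Low c t x) : (bAt G c t x).card ≤ 2 * t := by
  by_cases h : ∃ q, SS G t q ∧ x ∈ q
  · obtain ⟨q, hq, hxq⟩ := h
    obtain ⟨y, rfl⟩ := Sym2.mem_iff_exists.mp hxq
    have hy : Low c t y := hq.low hE (Sym2.mem_mk_right _ _)
    have hsub : bAt G c t x ⊆ nAt c x ∪ nAt c y := by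
      intro g hg
      rcases mem_union.mp hg with hg | hg
      · exact mem_union_left _ hg
      · simp only [mem_filter, mem_univ, true_and] at hg
        obtain ⟨hc, q', hq', hxq', ht⟩ := hg
        have := hq.unique hq' hxq hxq'
        subst this
        rcases tch_mk.mp ht.symm with h | h
        · exact mem_union_left _ (by simp [nAt, hc, h])
        · exact mem_union_right _ (by simp [nAt, hc, h])
    have := (card_le_card hsub).trans (card_union_le _ _)
    unfold Low at hx hy
    omega
  · have hsub : bAt G c t x ⊆ nAt c x := by
      intro g hg
      rcases mem_union.mp hg with hg | hg
      · exact hg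
      · simp only [mem_filter, mem_univ, true_and] at hg
        obtain ⟨hc, q', hq', hxq', ht⟩ := hg
        exact absurd ⟨q', hq', hxq'⟩ h
    have := card_le_card hsub
    unfold Low at hx
    omega

theorem cover_b (hmax : ∀ e, (e ∈ G.edgeSet ∧ ¬ SS G t e) → c e = none → ∀ i < k,
      ∃ g, c g = some i ∧ RR G t e g) {x y : V} (he : s(x, y) ∈ G.edgeSet)
    (hS : ¬ SS G t s(x, y)) (hc : c s(x, y) = none) (i : ℕ) (hi : i < k) :
    ∃ g ∈ bAt G c t x ∪ bAt G c t y, c g = some i := by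
  obtain ⟨g, hg, hR⟩ := hmax _ ⟨he, hS⟩ hc i hi
  refine ⟨g, ?_, hg⟩
  have hgn : c g ≠ none := by simp [hg]
  rcases hR with h | ⟨q, hq, h1, h2⟩
  · rcases tch_mk.mp h.symm with h | h
    · exact mem_union_left _ (mem_union_left _ (by simp [nAt, hgn, h]))
    · exact mem_union_right _ (mem_union_left _ (by simp [nAt, hgn, h]))
  · rcases tch_mk.mp h1.symm with h | h
    · refine mem_union_left _ (mem_union_right _ ?_)
      simp only [mem_filter, mem_univ, true_and]
      exact ⟨hgn, q, hq, h, h2⟩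
    · refine mem_union_right _ (mem_union_right _ ?_)
      simp only [mem_filter, mem_univ, true_and]
      exact ⟨hgn, q, hq, h, h2⟩

theorem ll_cases (hE : ∀ e i, c e = some i → (e ∈ G.edgeSet ∧ ¬ SS G t e) ∧ i < k)
    (hmax : ∀ e, (e ∈ G.edgeSet ∧ ¬ SS G t e) → c e = none → ∀ i < k,
      ∃ g, c g = some i ∧ RR G t e g) (hkt : 4 * t < k) {e : Sym2 V} (he : e ∈ G.edgeSet)
    (hL : LL c t e) : SS G t e ∨ c e ≠ none := by
  induction e using Sym2.ind with
  | _ x y =>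
  by_contra hcon
  push Not at hcon
  have h1 := index_count c k _ (cover_b hmax he hcon.1 hcon.2)
  have h2 := card_union_le (bAt G c t x) (bAt G c t y)
  have h3 := bAt_low hE (hL x (Sym2.mem_mk_left _ _))
  have h4 := bAt_low hE (hL y (Sym2.mem_mk_right _ _))
  omega

theorem yset_card (hE : ∀ e i, c e = some i → (e ∈ G.edgeSet ∧ ¬ SS G t e) ∧ i < k)
    (hmax : ∀ e, (e ∈ G.edgeSet ∧ ¬ SS G t e) → c e = none → ∀ i < k,
      ∃ g, c g = some i ∧ RR G t e g) {x y : V} (he : s(x, y) ∈ G.edgeSet)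
    (hx : ¬ Low c t x) :
    (if c s(x, y) = none then k - 2 * t else t - 1) ≤ (Yset c t x y).card := by
  have hsub : (nAt c x).erase s(x, y) ⊆ Yset c t x y := by
    intro g hg
    simp only [nAt, mem_erase, mem_filter, mem_univ, true_and] at hg
    simp only [Yset, mem_filter, mem_univ, true_and]
    exact ⟨⟨hg.2.1, fun h => hx (h x hg.2.2)⟩, hg.1, Or.inl hg.2.2⟩
  split_ifs with hc
  · have hS : ¬ SS G t s(x, y) := fun h => hx (h.low hE (Sym2.mem_mk_left _ _))
    have hcov := cover_b hmax he hS hc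
    have hsub' : nAt c x ⊆ Yset c t x y := by
      rw [erase_eq_of_notMem] at hsub
      · exact hsub
      · simp [nAt, hc]
    rw [bAt_high hE hx] at hcov
    by_cases hy : Low c t y
    · have h1 := index_count c k _ hcov
      have h2 := card_union_le (nAt c x) (bAt G c t y)
      have h3 := bAt_low hE hy
      have h4 := card_le_card hsub'
      omega
    · rw [bAt_high hE hy] at hcov
      have : k ≤ (Yset c t x y).card := by
        apply index_count c
        intro i hi
        obtain ⟨g, hg, hgi⟩ := hcov i hi
        rcases mem_union.mp hg with hg | hg
        · exact ⟨g, hsub' hg, hgi⟩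
        · simp only [nAt, mem_filter, mem_univ, true_and] at hg
          by_cases hex : ∃ g', Act c t g' ∧ x ∈ g' ∧ c g' = c g
          · obtain ⟨g', h1, h2, h3⟩ := hex
            exact ⟨g', hsub' (by simp [nAt, h1.1, h2]), h3.trans hgi⟩
          · push Not at hex
            refine ⟨g, ?_, hgi⟩
            simp only [Yset, mem_filter, mem_univ, true_and]
            refine ⟨⟨hg.1, fun h => hy (h y hg.2)⟩, ?_, Or.inr ⟨hg.2, hex⟩⟩
            rintro rfl
            exact hg.1 hc
      omega
  · have h1 := card_le_card hsub
    have h2 := pred_card_le_card_erase (s := nAt c x) (a := s(x, y))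
    unfold Low at hx
    omega

/-- Choice of the auxiliary edge for isolated low-low edges. -/
theorem aux_edge (hE : ∀ e i, c e = some i → (e ∈ G.edgeSet ∧ ¬ SS G t e) ∧ i < k)
    (hprop : ∀ e f i, RR G t e f → c e = some i → c f = some i → e = f)
    (hmax : ∀ e, (e ∈ G.edgeSet ∧ ¬ SS G t e) → c e = none → ∀ i < k,
      ∃ g, c g = some i ∧ RR G t e g) (hkt : 4 * t < k) {p : Sym2 V} (hp : p ∈ G.edgeSet)
    (hL : LL c t p) (hiso : ∀ q ∈ G.edgeSet, LL c t q → Tch q p → q = p)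
    (hne : (EON G p).Nonempty) :
    ∃ f ∈ EON G p, ¬ LL c t f ∧ (∀ i, c f = some i → ∀ g, c g = some i → Tch g p → g = f) := by
  have hmem : ∀ f, f ∈ EON G p ↔ (f ∈ G.edgeSet ∧ Tch f p) ∧ f ≠ p := fun f => Iff.rfl
  have hnl : ∀ f ∈ EON G p, ¬ LL c t f := by
    intro f hf hfL
    obtain ⟨⟨h1, h2⟩, h3⟩ := (hmem f).mp hf
    exact h3 (hiso f h1 hfL h2)
  by_cases hex : ∃ f ∈ EON G p, c f = none
  · obtain ⟨f, hf, hfc⟩ := hex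
    exact ⟨f, hf, hnl f hf, by simp [hfc]⟩
  · push Not at hex
    have hS : SS G t p := by
      by_contra hS
      have hcp : c p ≠ none := (ll_cases hE hmax hkt hp hL).resolve_left hS
      apply hS
      refine ⟨hp, ?_, ?_⟩
      · intro a ha
        refine lt_of_le_of_lt (card_le_card ?_) (hL a ha)
        intro f hf
        simp only [nAt, eAt, mem_filter, mem_univ, true_and] at hf ⊢
        refine ⟨?_, hf.2⟩
        by_cases hfp : f = p
        · rw [hfp]
          exact hcp
        · exact hex f ((hmem f).mpr ⟨⟨hf.1, a, hf.2, ha⟩, hfp⟩)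
      · intro q hq hqp hT
        have h1 := hnl q ((hmem q).mpr ⟨⟨hq, hT⟩, hqp⟩)
        simp only [LL, not_forall] at h1
        obtain ⟨a, ha, hal⟩ := h1
        refine ⟨a, ha, ?_⟩
        have := card_le_card (nAt_le_eAt hE a)
        unfold Low at hal
        omega
    obtain ⟨f, hf⟩ := hne
    refine ⟨f, hf, hnl f hf, ?_⟩
    intro i hi g hg hgT
    exact hprop g f i (Or.inr ⟨p, hS, hgT, ((hmem f).mp hf).1.2.symm⟩) hg hi

/-- Strong colouring of the low-low edges. -/
theorem strong_col (hE : ∀ e i, c e = some i → (e ∈ G.edgeSet ∧ ¬ SS G t e) ∧ i < k)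
    (hmax : ∀ e, (e ∈ G.edgeSet ∧ ¬ SS G t e) → c e = none → ∀ i < k,
      ∃ g, c g = some i ∧ RR G t e g) (hkt : 4 * t < k) :
    ∃ y : Sym2 V → ℕ, (∀ e ∈ G.edgeSet, LL c t e → y e < 4 * t * t + 1) ∧
      ∀ g e f, g ∈ G.edgeSet → LL c t g → e ∈ G.edgeSet → LL c t e → f ∈ G.edgeSet → LL c t f →
        Tch g e → Tch g f → y e = y f → e = f := by
  set D : Sym2 V → Prop := fun e => e ∈ G.edgeSet ∧ LL c t e with hD
  obtain ⟨d, h1, h2, h3⟩ := greedy_partial D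
    (fun e f => ∃ g, D g ∧ Tch g e ∧ Tch g f) (by
      rintro a b ⟨g, hg, h1, h2⟩
      exact ⟨g, hg, h2, h1⟩) (4 * t * t + 1)
  have hdeg : ∀ a, Low c t a → (univ.filter fun e => D e ∧ a ∈ e).card ≤ t := by
    intro a ha
    have hsub : (univ.filter fun e => D e ∧ a ∈ e) ⊆
        nAt c a ∪ univ.filter fun e => SS G t e ∧ a ∈ e := by
      intro e he
      simp only [mem_filter, mem_univ, true_and] at he
      rcases ll_cases hE hmax hkt he.1.1 he.1.2 with h | h
      · exact mem_union_right _ (by simp [h, he.2])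
      · exact mem_union_left _ (by simp [nAt, h, he.2])
    have hone : (univ.filter fun e => SS G t e ∧ a ∈ e).card ≤ 1 := by
      apply card_le_one.mpr
      intro e he f hf
      simp only [mem_filter, mem_univ, true_and] at he hf
      exact hf.1.unique he.1 hf.2 he.2
    have := (card_le_card hsub).trans (card_union_le _ _)
    unfold Low at ha
    omega
  have hdeg2 : ∀ e, D e → (univ.filter fun g => D g ∧ Tch g e).card ≤ 2 * t := by
    intro e
    induction e using Sym2.ind with
    | _ x y =>
    intro he
    have hsub : (univ.filter fun g => D g ∧ Tch g s(x, y)) ⊆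
        (univ.filter fun e => D e ∧ x ∈ e) ∪ (univ.filter fun e => D e ∧ y ∈ e) := by
      intro g hg
      simp only [mem_filter, mem_univ, true_and, mem_union] at hg ⊢
      rcases tch_mk.mp hg.2 with h | h
      · exact Or.inl ⟨hg.1, h⟩
      · exact Or.inr ⟨hg.1, h⟩
    have := (card_le_card hsub).trans (card_union_le _ _)
    have := hdeg x (he.2 x (Sym2.mem_mk_left _ _))
    have := hdeg y (he.2 y (Sym2.mem_mk_right _ _))
    omega
  have htot : ∀ e, D e → d e ≠ none := by
    intro e he hn
    have hc := index_count d (4 * t * t + 1)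
      ((univ.filter fun g => D g ∧ Tch g e).biUnion fun g => univ.filter fun f => D f ∧ Tch f g) (by
        intro i hi
        obtain ⟨b, hb, g, hg, hge, hgb⟩ := h3 e he hn i hi
        refine ⟨b, ?_, hb⟩
        simp only [mem_biUnion, mem_filter, mem_univ, true_and]
        exact ⟨g, ⟨hg, hge⟩, (h1 b i hb).1, hgb.symm⟩)
    have hc2 := card_biUnion_le_card_mul (univ.filter fun g => D g ∧ Tch g e)
      (fun g => univ.filter fun f => D f ∧ Tch f g) (2 * t) (by
        intro g hg
        simp only [mem_filter, mem_univ, true_and] at hg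
        exact hdeg2 g hg.1)
    have hc3 := Nat.mul_le_mul_right (2 * t) (hdeg2 e he)
    nlinarith
  refine ⟨fun e => (d e).getD 0, ?_, ?_⟩
  · intro e he hl
    obtain ⟨i, hi⟩ := Option.ne_none_iff_exists'.mp (htot e ⟨he, hl⟩)
    simp only [hi, Option.getD_some]
    exact (h1 e i hi).2
  · intro g e f hg hgl he hel hf hfl hge hgf hy
    obtain ⟨i, hi⟩ := Option.ne_none_iff_exists'.mp (htot e ⟨he, hel⟩)
    obtain ⟨j, hj⟩ := Option.ne_none_iff_exists'.mp (htot f ⟨hf, hfl⟩)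
    simp only [hi, hj, Option.getD_some] at hy
    subst hy
    exact h2 e f i ⟨g, ⟨hg, hgl⟩, hge, hgf⟩ hi hj

end struct

theorem main_col {V : Type} [Fintype V] (G : SimpleGraph V) (t k Δ : ℕ)
    (hΔ : ∀ v, (eAt G v).card ≤ Δ) (hkt : 4 * t < k) (hΔ1 : 1 ≤ Δ)
    (hn1 : 4 * (k : ℝ) * Δ * (1 / 2) ^ (k - 2 * t) ≤ 1 / 8)
    (hn2 : 4 * (k : ℝ) * k * (1 / 2) ^ (t - 1) ≤ 1 / 8) :
    ∃ col : Sym2 V → ℕ, ClosedCF G col (k + 4 * t * t + 3) ∧ OpenCF G col (k + 4 * t * t + 3) := by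
  obtain ⟨c, hE, hprop, hmax⟩ := greedy_partial (fun e => e ∈ G.edgeSet ∧ ¬ SS G t e) (RR G t) (by
    rintro a b (h | ⟨q, hq, h1, h2⟩)
    · exact Or.inl h.symm
    · exact Or.inr ⟨q, hq, h2.symm, h1.symm⟩) k
  have hm : ∀ e f i v, v ∈ e → v ∈ f → c e = some i → c f = some i → e = f :=
    fun e f i v h1 h2 => hprop e f i (Or.inl ⟨v, h1, h2⟩)
  obtain ⟨ω, hω⟩ := random_step G c t k Δ (fun e i h => ⟨(hE e i h).1.1, (hE e i h).2⟩) hm hΔ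
    (fun x y => yset_card hE hmax) (by omega) hΔ1 hn1 hn2
  obtain ⟨y, hy1, hy2⟩ := strong_col hE hmax hkt
  set Iso : Sym2 V → Prop := fun p => (p ∈ G.edgeSet ∧ LL c t p) ∧
    (∀ q ∈ G.edgeSet, LL c t q → Tch q p → q = p) ∧ (EON G p).Nonempty with hIso
  have hF : ∀ p, ∃ f, Iso p → (f ∈ EON G p ∧ ¬ LL c t f ∧
      (∀ i, c f = some i → ∀ g, c g = some i → Tch g p → g = f)) := by
    intro p
    by_cases h : Iso p
    · obtain ⟨f, h1, h2⟩ := aux_edge hE hprop hmax hkt h.1.1 h.1.2 h.2.1 h.2.2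
      exact ⟨f, fun _ => ⟨h1, h2⟩⟩
    · exact ⟨p, fun h' => absurd h' h⟩
  choose F hF using hF
  set col : Sym2 V → ℕ := fun e =>
    if LL c t e then k + y e
    else if c e ≠ none ∧ ω e = true then (c e).getD 0
    else if ∃ p, Iso p ∧ e = F p then k + 4 * t * t + 1
    else k + 4 * t * t + 2 with hcol
  have hlt : ∀ e i, c e = some i → i < k := fun e i h => (hE e i h).2
  have colA : ∀ e, LL c t e → col e = k + y e := fun e h => by simp only [hcol, if_pos h]
  have colB : ∀ e i, ¬ LL c t e → c e = some i → ω e = true → col e = i := by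
    intro e i h1 h2 h3
    simp [hcol, h1, h2, h3]
  have colC : ∀ e, ¬ LL c t e → ¬ (c e ≠ none ∧ ω e = true) → (∃ p, Iso p ∧ e = F p) →
      col e = k + 4 * t * t + 1 := by
    intro e h1 h2 h3
    simp only [hcol, if_neg h1, if_neg h2, if_pos h3]
  have colD : ∀ e, ¬ LL c t e → ¬ (c e ≠ none ∧ ω e = true) → ¬ (∃ p, Iso p ∧ e = F p) →
      col e = k + 4 * t * t + 2 := by
    intro e h1 h2 h3
    simp only [hcol, if_neg h1, if_neg h2, if_neg h3]
  -- case analysis on colours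
  have hcases : ∀ e ∈ G.edgeSet, (LL c t e ∧ col e = k + y e ∧ y e < 4 * t * t + 1) ∨
      (¬ LL c t e ∧ ω e = true ∧ ∃ i, c e = some i ∧ col e = i ∧ i < k) ∨
      (¬ LL c t e ∧ (∃ p, Iso p ∧ e = F p) ∧ col e = k + 4 * t * t + 1) ∨
      (¬ LL c t e ∧ col e = k + 4 * t * t + 2) := by
    intro e he
    by_cases h1 : LL c t e
    · exact Or.inl ⟨h1, colA e h1, hy1 e he h1⟩
    · by_cases h2 : c e ≠ none ∧ ω e = true
      · obtain ⟨i, hi⟩ := Option.ne_none_iff_exists'.mp h2.1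
        exact Or.inr (Or.inl ⟨h1, h2.2, i, hi, colB e i h1 hi h2.2, hlt e i hi⟩)
      · by_cases h3 : ∃ p, Iso p ∧ e = F p
        · exact Or.inr (Or.inr (Or.inl ⟨h1, h3, colC e h1 h2 h3⟩))
        · exact Or.inr (Or.inr (Or.inr ⟨h1, colD e h1 h2 h3⟩))
  have hbound : ∀ e ∈ G.edgeSet, col e < k + 4 * t * t + 3 := by
    intro e he
    rcases hcases e he with ⟨_, h2, h3⟩ | ⟨_, _, i, _, h2, h3⟩ | ⟨_, _, h2⟩ | ⟨_, h2⟩ <;> omega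
  have hinvB : ∀ e ∈ G.edgeSet, ∀ i < k, col e = i → ¬ LL c t e ∧ ω e = true ∧ c e = some i := by
    intro e he i hi hci
    rcases hcases e he with ⟨_, h2, h3⟩ | ⟨h1, h4, i', h5, h2, h3⟩ | ⟨_, _, h2⟩ | ⟨_, h2⟩
    · omega
    · have : i' = i := by omega
      subst this
      exact ⟨h1, h4, h5⟩
    · omega
    · omega
  have hinvA : ∀ e ∈ G.edgeSet, ∀ j < 4 * t * t + 1, col e = k + j → LL c t e ∧ y e = j := by
    intro e he i hi hci
    rcases hcases e he with ⟨h1, h2, h3⟩ | ⟨h1, h4, i', h5, h2, h3⟩ | ⟨_, _, h2⟩ | ⟨_, h2⟩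
    · exact ⟨h1, by omega⟩
    · omega
    · omega
    · omega
  have hinvC : ∀ e ∈ G.edgeSet, col e = k + 4 * t * t + 1 →
      ¬ LL c t e ∧ ∃ p, Iso p ∧ e = F p := by
    intro e he hci
    rcases hcases e he with ⟨h1, h2, h3⟩ | ⟨h1, h4, i', h5, h2, h3⟩ | ⟨h1, h3, h2⟩ | ⟨_, h2⟩
    · omega
    · omega
    · exact ⟨h1, h3⟩
    · omega
  -- satisfaction of edges which are not low-low
  have hhigh : ∀ e ∈ G.edgeSet, ¬ LL c t e → ∃ f ∈ EON G e, ∀ g ∈ ECN G e, col g = col f → g = f := by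
    intro e he hl
    obtain ⟨i, f, hne, ⟨h1, h2, h3, h4⟩, hu⟩ := hω e he hl
    refine ⟨f, ⟨⟨(hE f i h3).1.1, h1⟩, hne⟩, ?_⟩
    rintro g ⟨hg, hgT⟩ hcg
    rw [colB f i h2.2 h3 h4] at hcg
    obtain ⟨g1, g2, g3⟩ := hinvB g hg i (hlt f i h3) hcg
    exact hu g ⟨hgT, ⟨by simp [g3], g1⟩, g3, g2⟩
  have hself : ∀ e ∈ G.edgeSet, ∀ f ∈ G.edgeSet, LL c t e → LL c t f → Tch f e →
      ∀ g ∈ ECN G e, col g = col f → g = f := by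
    rintro e he f hf hle hlf hfe g ⟨hg, hgT⟩ hcg
    rw [colA f hlf] at hcg
    obtain ⟨g1, g2⟩ := hinvA g hg _ (hy1 f hf hlf) hcg
    exact hy2 e g f he hle hg g1 hf hlf (Tch.symm hgT) hfe.symm g2
  refine ⟨col, ⟨hbound, ?_⟩, ⟨hbound, ?_⟩⟩
  · intro e he
    by_cases hl : LL c t e
    · have hee : Tch e e := ⟨_, Sym2.out_fst_mem e, Sym2.out_fst_mem e⟩
      refine ⟨col e, e, ⟨⟨he, hee⟩, rfl⟩, ?_⟩
      rintro g ⟨hg, hcg⟩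
      exact hself e he e he hl hl hee g hg hcg
    · obtain ⟨f, hf, hu⟩ := hhigh e he hl
      exact ⟨col f, f, ⟨hf.1, rfl⟩, fun g hg => hu g hg.1 hg.2⟩
  · intro e he hne
    suffices h : ∃ f ∈ EON G e, ∀ g ∈ ECN G e, col g = col f → g = f by
      obtain ⟨f, hf, hu⟩ := h
      exact ⟨col f, f, ⟨hf, rfl⟩, fun g hg => hu g hg.1.1 hg.2⟩
    by_cases hl : LL c t e
    · by_cases hiso : ∀ q ∈ G.edgeSet, LL c t q → Tch q e → q = e
      · have hI : Iso e := ⟨⟨he, hl⟩, hiso, hne⟩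
        obtain ⟨hf, hfl, hfu⟩ := hF e hI
        refine ⟨F e, hf, ?_⟩
        rintro g ⟨hg, hgT⟩ hcg
        by_cases hon : c (F e) ≠ none ∧ ω (F e) = true
        · obtain ⟨i, hi⟩ := Option.ne_none_iff_exists'.mp hon.1
          rw [colB _ i hfl hi hon.2] at hcg
          exact hfu i hi g (hinvB g hg i (hlt _ i hi) hcg).2.2 hgT
        · rw [colC _ hfl hon ⟨e, hI, rfl⟩] at hcg
          obtain ⟨hgl, p, hp, hgp⟩ := hinvC g hg hcg
          obtain ⟨⟨⟨_, a', ha', hap⟩, _⟩, _, _⟩ := hF p hp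
          rw [← hgp] at ha'
          obtain ⟨a, ha, hae⟩ := hgT
          have haa : a = a' := by
            by_contra hne'
            apply hgl
            have hga : g = s(a, a') := ((Sym2.mem_and_mem_iff hne').mp ⟨ha, ha'⟩)
            rw [hga]
            intro v hv
            rcases Sym2.mem_iff.mp hv with rfl | rfl
            · exact hl _ hae
            · exact hp.1.2 _ hap
          subst haa
          have : p = e := hiso p hp.1.1 hp.1.2 ⟨a, hap, hae⟩
          rw [hgp, this]
      · push Not at hiso
        obtain ⟨q, hq, hql, hqT, hqe⟩ := hiso
        exact ⟨q, ⟨⟨hq, hqT⟩, hqe⟩, hself e he q hq hl hql hqT⟩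
    · exact hhigh e he hl

theorem eAt_card_le {V : Type} [Fintype V] (G : SimpleGraph V) [DecidableRel G.Adj] (v : V) :
    (eAt G v).card ≤ G.maxDegree := by
  refine le_trans (le_of_eq ?_) (G.degree_le_maxDegree v)
  rw [← G.card_incidenceFinset_eq_degree v]
  congr 1
  ext e
  simp [eAt, SimpleGraph.mem_incidenceFinset, SimpleGraph.incidenceSet]

theorem exists_T (ε : ℝ) (hε : 0 < ε) : ∃ T : ℕ, 1 ≤ T ∧ ∀ t : ℕ, T ≤ t →
    1024 * ((t : ℝ) + 1) ^ 8 ≤ 2 ^ t ∧ 4 * (t : ℝ) * t + 3 * t + 5 + ε ≤ ε * (t : ℝ) ^ 4 := by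
  have h := tendsto_pow_const_div_const_pow_of_one_lt 8 (r := (2 : ℝ)) (by norm_num)
  have h' := (h.comp (Filter.tendsto_add_atTop_nat 1)).eventually
    (gt_mem_nhds (show (0 : ℝ) < 1 / 2048 by norm_num))
  obtain ⟨T1, hT1⟩ := Filter.eventually_atTop.mp h'
  obtain ⟨T2, hT2⟩ := exists_nat_ge ((12 + ε) / ε)
  refine ⟨max (max T1 T2) 1, le_max_right _ _, fun t ht => ?_⟩
  have ht1 : T1 ≤ t := le_trans (le_max_left _ _) (le_trans (le_max_left _ _) ht)
  have ht2 : T2 ≤ t := le_trans (le_max_right _ _) (le_trans (le_max_left _ _) ht)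
  have ht3 : 1 ≤ t := le_trans (le_max_right _ _) ht
  constructor
  · have := hT1 t ht1
    simp only [Function.comp] at this
    rw [div_lt_iff₀ (by positivity)] at this
    push_cast at this
    rw [pow_succ (2 : ℝ)] at this
    linarith
  · have h1 : (1 : ℝ) ≤ t := by exact_mod_cast ht3
    have h2 : (12 + ε) / ε ≤ t := hT2.trans (by exact_mod_cast ht2)
    rw [div_le_iff₀ hε] at h2
    have h3 : (t : ℝ) ≤ (t : ℝ) ^ 2 := by nlinarith
    have h4 : 12 + ε ≤ ε * (t : ℝ) ^ 2 := by nlinarith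
    have h5 : (12 + ε) * (t : ℝ) ^ 2 ≤ ε * (t : ℝ) ^ 2 * (t : ℝ) ^ 2 :=
      mul_le_mul_of_nonneg_right h4 (by positivity)
    nlinarith

end helpers

theorem stmt13 (ε : ℝ) (hε : 0 < ε) :
    ∃ Δε : ℕ, ∀ (V : Type) [Fintype V] (G : SimpleGraph V) [DecidableRel G.Adj],
      1 < G.maxDegree → Δε ≤ G.maxDegree →
      (ccfIndex G : ℝ) ≤ (1 + ε) * Real.logb 2 (G.maxDegree : ℝ) ∧
      (ocfIndex G : ℝ) ≤ (1 + ε) * Real.logb 2 (G.maxDegree : ℝ) := by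
  obtain ⟨T, hT1, hT⟩ := exists_T ε hε
  refine ⟨2 ^ (T ^ 4), ?_⟩
  intro V _ G _ hΔ1 hΔ
  set D := G.maxDegree with hD
  set L := Nat.log 2 D + 1 with hL
  set s := Nat.sqrt L with hs
  set t := Nat.sqrt s with ht
  have hLT : T ^ 4 ≤ L := by
    have : T ^ 4 ≤ Nat.log 2 D := (Nat.le_log_iff_pow_le (by norm_num) (by omega)).mpr hΔ
    omega
  have hTt : T ≤ t := by
    rw [ht, Nat.le_sqrt, hs, Nat.le_sqrt]
    calc T * T * (T * T) = T ^ 4 := by ring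
      _ ≤ L := hLT
  obtain ⟨n1, n2⟩ := hT t hTt
  have ht1 : 1 ≤ t := hT1.trans hTt
  have hss : t * t ≤ s := Nat.sqrt_le s
  have hLs : s * s ≤ L := Nat.sqrt_le L
  have hs2 : s < (t + 1) * (t + 1) := Nat.lt_succ_sqrt s
  have hL2 : L < (s + 1) * (s + 1) := Nat.lt_succ_sqrt L
  have hlow : t ^ 4 ≤ L := by
    calc t ^ 4 = (t * t) * (t * t) := by ring
      _ ≤ s * s := Nat.mul_le_mul hss hss
      _ ≤ L := hLs
  have hup : L < (t + 1) ^ 4 := by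
    calc L < (s + 1) * (s + 1) := hL2
      _ ≤ ((t + 1) * (t + 1)) * ((t + 1) * (t + 1)) := Nat.mul_le_mul hs2 hs2
      _ = (t + 1) ^ 4 := by ring
  have htL : t ≤ L := (Nat.le_self_pow (by norm_num) t).trans hlow
  set k := L + 3 * t + 1 with hk
  have hkup : k ≤ 4 * (t + 1) ^ 4 := by
    have : t + 1 ≤ (t + 1) ^ 4 := Nat.le_self_pow (by norm_num) _
    omega
  have hkR : (k : ℝ) ≤ 4 * ((t : ℝ) + 1) ^ 4 := by exact_mod_cast hkup
  have hk1 : (1 : ℝ) ≤ k := by exact_mod_cast (by omega : 1 ≤ k)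
  have hbig : 64 * (k : ℝ) * k ≤ 2 ^ t := by
    refine le_trans ?_ n1
    have : (k : ℝ) * k ≤ (4 * ((t : ℝ) + 1) ^ 4) * (4 * ((t : ℝ) + 1) ^ 4) :=
      mul_le_mul hkR hkR (by positivity) (by positivity)
    nlinarith
  have hDL : (D : ℝ) ≤ 2 ^ L := by
    have : D < 2 ^ (Nat.log 2 D).succ := Nat.lt_pow_succ_log_self (by norm_num) D
    exact_mod_cast this.le
  obtain ⟨col, hc, ho⟩ := main_col G t k D (eAt_card_le G) (by omega) (by omega) (by
      have e : k - 2 * t = L + t + 1 := by omega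
      rw [e, one_div, inv_pow, ← div_eq_mul_inv, div_le_iff₀ (by positivity), pow_succ, pow_add]
      have h1 : 4 * (k : ℝ) * D ≤ 4 * k * 2 ^ L := mul_le_mul_of_nonneg_left hDL (by positivity)
      have h2 : 16 * (k : ℝ) ≤ 2 ^ t := by nlinarith
      have h3 : 16 * (k : ℝ) * 2 ^ L ≤ 2 ^ t * 2 ^ L :=
        mul_le_mul_of_nonneg_right h2 (by positivity)
      linarith) (by
      rw [one_div, inv_pow, ← div_eq_mul_inv, div_le_iff₀ (by positivity)]
      obtain ⟨u, hu⟩ : ∃ u, t = u + 1 := ⟨t - 1, by omega⟩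
      have h0 : (2 : ℝ) ^ t = 2 ^ (t - 1) * 2 := by
        rw [← pow_succ]
        congr 1
        omega
      rw [h0] at hbig
      linarith)
  have hlog : ((L : ℝ) - 1) ≤ Real.logb 2 (D : ℝ) := by
    rw [Real.le_logb_iff_rpow_le (by norm_num) (by exact_mod_cast (by omega : 0 < D))]
    have h1 : (L : ℝ) - 1 = ((Nat.log 2 D : ℕ) : ℝ) := by
      rw [hL]
      push_cast
      ring
    rw [h1, Real.rpow_natCast]
    exact_mod_cast Nat.pow_log_le_self 2 (by omega : D ≠ 0)
  have hfin : ((k + 4 * t * t + 3 : ℕ) : ℝ) ≤ (1 + ε) * Real.logb 2 (D : ℝ) := by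
    have h1 : (1 + ε) * ((L : ℝ) - 1) ≤ (1 + ε) * Real.logb 2 (D : ℝ) :=
      mul_le_mul_of_nonneg_left hlog (by linarith)
    have h2 : ε * (t : ℝ) ^ 4 ≤ ε * L :=
      mul_le_mul_of_nonneg_left (by exact_mod_cast hlow) hε.le
    refine le_trans ?_ h1
    rw [hk]
    push_cast
    linarith
  constructor
  · refine le_trans ?_ hfin
    have h : ccfIndex G ≤ k + 4 * t * t + 3 := Nat.sInf_le ⟨col, hc⟩
    exact_mod_cast h
  · refine le_trans ?_ hfin
    have h : ocfIndex G ≤ k + 4 * t * t + 3 := Nat.sInf_le ⟨col, ho⟩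
    exact_mod_cast h
end
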